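/- arXiv:1712.08678 — 3 statements merged into one kernel-verified Lean document; each statement's English description precedes it below -/
import Mathlib

section
/- For every p ∈ [2,∞) and every κ > 0 there exists a constant C > 0 such that for every integer N ≥ 2 (with ε = 1/N) and every f: Λ_ε → ℝ: ‖Ex f‖_{L^p(𝕋²)} ≤ C ‖f‖_{L^p(Λ_ε)} + C ε^{−κ} ‖f‖_{L^{2p−2}(Λ_ε)}^{1−1/p} ( Σ_{x,y∈Λ_ε, |x−y|=ε} ε² (f(y)−f(x))² )^{1/(2p)}, where the sum runs over nearest-neighbour pairs in Λ_ε (periodic). -/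
open scoped BigOperators ENNReal
open MeasureTheory

noncomputable section

namespace IsingKac

/-- The periodic lattice `Λ_N = {1-N, …, N}²`, realised as `(ℤ/2Nℤ)²`. -/
abbrev Lat (N : ℕ) : Type := ZMod (2*N) × ZMod (2*N)

instance latNeZero (N : ℕ) [NeZero N] : NeZero (2*N) := ⟨by have := NeZero.ne N; omega⟩

/-- The representative of `v ∈ ℤ/2Nℤ` lying in `{1-N, …, N}`. -/
def latRep (N : ℕ) (v : ZMod (2*N)) : ℤ :=
  if (v.val : ℤ) ≤ (N : ℤ) then (v.val : ℤ) else (v.val : ℤ) - 2*N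

def latRep2 (N : ℕ) (z : Lat N) : ℤ × ℤ := (latRep N z.1, latRep N z.2)

/-- The character `e_w(x) = exp(iπ w·x)`. -/
def eW (w : ℤ × ℤ) (x : ℝ × ℝ) : ℂ :=
  Complex.exp ((Real.pi : ℂ) * Complex.I * ((w.1 : ℂ) * (x.1 : ℂ) + (w.2 : ℂ) * (x.2 : ℂ)))

/-- The point `ε z ∈ Λ_ε ⊂ 𝕋²` corresponding to `z ∈ Λ_N` (with `ε = 1/N`). -/
def latPt (N : ℕ) (z : Lat N) : ℝ × ℝ :=
  ((latRep N z.1 : ℝ) / N, (latRep N z.2 : ℝ) / N)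

/-- Discrete Fourier coefficient `f̂(w) = Σ_{x ∈ Λ_ε} ε² f(x) e^{-iπ w·x}`. -/
def dFT (N : ℕ) [NeZero N] (f : Lat N → ℂ) (w : ℤ × ℤ) : ℂ :=
  ∑ z : Lat N, ((N : ℂ)^2)⁻¹ * f z * (starRingEnd ℂ) (eW w (latPt N z))

/-- The extension operator `(Ex f)(x) = (1/4) Σ_{w ∈ Λ_N} f̂(w) e^{iπ w·x}` for `x ∈ 𝕋²`. -/
def Ex (N : ℕ) [NeZero N] (f : Lat N → ℂ) (x : ℝ × ℝ) : ℂ :=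
  (1/4 : ℂ) * ∑ z : Lat N, dFT N f (latRep2 N z) * eW (latRep2 N z) x

/-- Discrete `L^p` norm on `Λ_ε`, `p ∈ [1,∞]`. -/
def dLp (N : ℕ) [NeZero N] (p : ℝ≥0∞) {E : Type*} [NormedAddCommGroup E]
    (f : Lat N → E) : ℝ :=
  if p = ∞ then ⨆ z : Lat N, ‖f z‖
  else (∑ z : Lat N, ((N : ℝ)^2)⁻¹ * ‖f z‖ ^ p.toReal) ^ (1/p.toReal)

/-- Fundamental domain of the torus `𝕋² = [-1,1]²`. -/
def box : Set (ℝ × ℝ) := Set.Icc (-1 : ℝ) 1 ×ˢ Set.Icc (-1 : ℝ) 1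

/-- `L^p(𝕋²)` norm, `p ∈ [1,∞]`. -/
def cLp (p : ℝ≥0∞) {E : Type*} [NormedAddCommGroup E] (g : ℝ × ℝ → E) : ℝ≥0∞ :=
  eLpNorm g p (volume.restrict box)

/-- Euclidean norm on `ℝ²`. -/
def enorm2 (r : ℝ × ℝ) : ℝ := Real.sqrt (r.1^2 + r.2^2)

/-- A Littlewood–Paley partition of unity `(χ̃, χ)` on `ℝ²`. -/
structure LPpartition : Type where
  chit : ℝ × ℝ → ℝ
  chi : ℝ × ℝ → ℝ
  cont_t : Continuous chit
  cont : Continuous chi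
  mem_t : ∀ r, chit r ∈ Set.Icc (0:ℝ) 1
  mem : ∀ r, chi r ∈ Set.Icc (0:ℝ) 1
  supp_t : ∀ r : ℝ × ℝ, 4/3 < enorm2 r → chit r = 0
  supp : ∀ r : ℝ × ℝ, enorm2 r < 3/4 ∨ 8/3 < enorm2 r → chi r = 0
  partition : ∀ r : ℝ × ℝ, chit r + ∑' k : ℕ, chi ((2:ℝ)^(-(k:ℤ)) • r) = 1

/-- `χ_k`, for `k ≥ -1`. -/
def LPchi (P : LPpartition) (k : ℤ) : ℝ × ℝ → ℝ :=
  if k = -1 then P.chit else fun r => P.chi ((2:ℝ)^(-k) • r)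

/-- The Littlewood–Paley block `δ_k (Ex f)` of (the extension of) a lattice function. -/
def dBlock (N : ℕ) [NeZero N] (P : LPpartition) (k : ℤ) (f : Lat N → ℂ) (x : ℝ × ℝ) : ℂ :=
  (1/4 : ℂ) * ∑ z : Lat N,
    ((LPchi P k ((latRep N z.1 : ℝ), (latRep N z.2 : ℝ)) : ℝ) : ℂ) *
      dFT N f (latRep2 N z) * eW (latRep2 N z) x

/-- Discrete Besov norm `‖f‖_{B^ν_{p,q}(Λ_ε)}`. -/
def dBesov (N : ℕ) [NeZero N] (P : LPpartition) (ν : ℝ) (p q : ℝ≥0∞) (f : Lat N → ℂ) : ℝ :=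
  if q = ∞ then
    ⨆ k : ℕ, (2:ℝ)^(ν * ((k:ℝ) - 1)) * dLp N p (fun z => dBlock N P ((k:ℤ)-1) f (latPt N z))
  else
    (∑' k : ℕ, ((2:ℝ)^(ν * ((k:ℝ) - 1)) *
      dLp N p (fun z => dBlock N P ((k:ℤ)-1) f (latPt N z))) ^ q.toReal) ^ (1/q.toReal)

/-- The `C^{-ν}` (Besov–Hölder) norm of the extension `Ex f`:
`sup_{k ≥ -1} 2^{-νk} ‖δ_k (Ex f)‖_{L^∞(𝕋²)}`. -/
def holderNeg (N : ℕ) [NeZero N] (P : LPpartition) (ν : ℝ) (f : Lat N → ℂ) : ℝ :=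
  ⨆ k : ℕ, (2:ℝ)^(-ν * ((k:ℝ) - 1)) * ⨆ x : ℝ × ℝ, ‖dBlock N P ((k:ℤ)-1) f x‖

/-- Spin values. -/
def spin (s : Bool) : ℝ := if s then 1 else -1

/-- Hamiltonian `H(σ) = (β/2) Σ_{x,y} k(x-y) σ_x σ_y + b Σ_x σ_x`. -/
def hamil (N : ℕ) [NeZero N] (kk : Lat N → ℝ) (β b : ℝ) (σ : Lat N → ℝ) : ℝ :=
  β/2 * ∑ x : Lat N, ∑ y : Lat N, kk (x - y) * σ x * σ y + b * ∑ x : Lat N, σ x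

/-- Gibbs expectation `E^γ_{β,b}[F]`. -/
def gibbsE (N : ℕ) [NeZero N] (kk : Lat N → ℝ) (β b : ℝ) (F : (Lat N → ℝ) → ℝ) : ℝ :=
  (∑ s : Lat N → Bool, Real.exp (hamil N kk β b (fun x => spin (s x))) * F (fun x => spin (s x))) /
  (∑ s : Lat N → Bool, Real.exp (hamil N kk β b (fun x => spin (s x))))

/-- The profile `𝔎 : ℝ² → [0,1]`, twice differentiable, radial, supported in `B(0,3)`,
not identically zero. -/
structure KacProfile : Type where
  f : ℝ × ℝ → ℝ
  smooth : ContDiff ℝ 2 f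
  mem : ∀ x, f x ∈ Set.Icc (0:ℝ) 1
  radial : ∀ x y : ℝ × ℝ, enorm2 x = enorm2 y → f x = f y
  supp : ∀ x : ℝ × ℝ, 3 < enorm2 x → f x = 0
  nontriv : ∃ x, f x ≠ 0

/-- The Kac kernel `k_γ(z) = c γ² 𝔎(γ·z)` (shortest periodic representative), `k_γ(0)=0`. -/
def kGamma (𝔎 : KacProfile) (N : ℕ) (c γ : ℝ) (z : Lat N) : ℝ :=
  if z = 0 then 0 else c * γ^2 * 𝔎.f (γ * (latRep N z.1 : ℝ), γ * (latRep N z.2 : ℝ))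

/-- `γ = N^{-1/2}`, so that `γ² = ε = 1/N`. -/
def gam (N : ℕ) : ℝ := Real.sqrt ((N : ℝ)⁻¹)

/-- Fourier transform `K̂_γ(ω) = Σ_z k_γ(z) e^{-iπ ω·(εz)}` of the macroscopic kernel
(real, since the kernel is even). -/
def kHat (N : ℕ) [NeZero N] (kk : Lat N → ℝ) (ω : ℤ × ℤ) : ℝ :=
  ∑ z : Lat N, kk z *
    Real.cos (Real.pi * ((ω.1 : ℝ) * (latRep N z.1 : ℝ) / N + (ω.2 : ℝ) * (latRep N z.2 : ℝ) / N))

/-- The renormalisation constant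
`𝔠_γ = (1/4) Σ_{ω ∈ Λ_N \ {0}} |K̂_γ(ω)|² / (γ^{-2} (1-K̂_γ(ω)))`. -/
def cGamma (N : ℕ) [NeZero N] (kk : Lat N → ℝ) (γ : ℝ) : ℝ :=
  (1/4) * ∑ z : Lat N, if z = (0 : Lat N) then 0 else
    (kHat N kk (latRep2 N z))^2 / ((γ^2)⁻¹ * (1 - kHat N kk (latRep2 N z)))

/-- Critical inverse temperature `β = 1 + γ²(𝔠_γ + A)`. -/
def betaCrit (𝔎 : KacProfile) (N : ℕ) [NeZero N] (c A : ℝ) : ℝ :=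
  1 + (gam N)^2 * (cGamma N (kGamma 𝔎 N c (gam N)) (gam N) + A)

/-- The fluctuation field `X_γ(x) = γ^{-1} Σ_z k_γ(ε^{-1}x - z) σ_z`, as a function on `Λ_N`. -/
def fluct (N : ℕ) [NeZero N] (kk : Lat N → ℝ) (γ : ℝ) (σ : Lat N → ℝ) (z : Lat N) : ℝ :=
  γ⁻¹ * ∑ y : Lat N, kk (z - y) * σ y

/-- The rescaled step field `γ^{-1} σ_{⌊ε^{-1}x⌋}` on the torus (without the `γ^{-1}`). -/
def stepField (N : ℕ) (σ : Lat N → ℝ) (x : ℝ × ℝ) : ℝ :=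
  σ (((⌊(N : ℝ) * x.1⌋ : ℤ) : ZMod (2*N)), ((⌊(N : ℝ) * x.2⌋ : ℤ) : ZMod (2*N)))

/-- Fourier coefficient on the torus: `ĝ(ω) = ∫_{𝕋²} g(x) e^{-iπω·x} dx`. -/
def cFT (g : ℝ × ℝ → ℂ) (ω : ℤ × ℤ) : ℂ :=
  ∫ x in box, g x * (starRingEnd ℂ) (eW ω x)


/-! ### Additional definitions -/

/-- Nearest-neighbour Dirichlet sum `Σ_{x,y ∈ Λ_ε, |x-y|=ε} ε² (f(y)-f(x))²`. -/
def nnSum (N : ℕ) [NeZero N] (f : Lat N → ℝ) : ℝ :=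
  ∑ x : Lat N, ((N : ℝ)^2)⁻¹ *
    ((f (x + (1, 0)) - f x)^2 + (f (x + (0, 1)) - f x)^2 +
     (f (x - (1, 0)) - f x)^2 + (f (x - (0, 1)) - f x)^2)

/-- The `d`-dimensional periodic lattice `Λ_N^d`. -/
abbrev LatD (d N : ℕ) : Type := Fin d → ZMod (2*N)

/-- Discrete `L^p` norm on `Λ_ε^d`, `p ∈ [1,∞]`. -/
def dLpD (d N : ℕ) [NeZero N] (p : ℝ≥0∞) (f : LatD d N → ℂ) : ℝ :=
  if p = ∞ then ⨆ z : LatD d N, ‖f z‖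
  else (∑ z : LatD d N, ((N : ℝ)^d)⁻¹ * ‖f z‖ ^ p.toReal) ^ (1/p.toReal)

/-- `Σ_{w ∈ Λ_N^d} χ(λ w) e_w`, evaluated at the lattice point `ε z ∈ Λ_ε^d`. -/
def gLam (d N : ℕ) [NeZero N] (χ : (Fin d → ℝ) → ℝ) (lam : ℝ) (z : LatD d N) : ℂ :=
  ∑ w : LatD d N, ((χ (fun i => lam * (latRep N (w i) : ℝ)) : ℝ) : ℂ) *
    Complex.exp ((Real.pi : ℂ) * Complex.I *
      ((∑ i : Fin d, (latRep N (w i) : ℝ) * ((latRep N (z i) : ℝ) / N) : ℝ) : ℂ))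

/-- Second partial derivative of `φ` in directions `v, w`. -/
def pd2 (φ : ℝ × ℝ → ℝ) (v w : ℝ × ℝ) : ℝ × ℝ → ℝ :=
  fun x => fderiv ℝ (fun y => fderiv ℝ φ y v) x w

/-- `max_{i,j ∈ {1,2}} ‖∂_i ∂_j φ‖_{L^∞}`. -/
def secondDerivBound (φ : ℝ × ℝ → ℝ) : ℝ :=
  max (max (⨆ x : ℝ × ℝ, |pd2 φ (1,0) (1,0) x|) (⨆ x : ℝ × ℝ, |pd2 φ (1,0) (0,1) x|))
      (max (⨆ x : ℝ × ℝ, |pd2 φ (0,1) (1,0) x|) (⨆ x : ℝ × ℝ, |pd2 φ (0,1) (0,1) x|))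

/-- The Littlewood–Paley block `δ_k g` of a function on the torus. -/
def cBlock (P : LPpartition) (k : ℤ) (g : ℝ × ℝ → ℂ) (x : ℝ × ℝ) : ℂ :=
  (1/4 : ℂ) * ∑' ω : ℤ × ℤ, ((LPchi P k ((ω.1 : ℝ), (ω.2 : ℝ)) : ℝ) : ℂ) * cFT g ω * eW ω x

/-- Besov norm `‖g‖_{B^ν_{1,1}(𝕋²)} = Σ_{k ≥ -1} 2^{νk} ‖δ_k g‖_{L¹(𝕋²)}`. -/
def cBesov11 (P : LPpartition) (ν : ℝ) (g : ℝ × ℝ → ℂ) : ℝ :=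
  ∑' k : ℕ, (2:ℝ) ^ (ν * ((k:ℝ) - 1)) * ∫ x in box, ‖cBlock P ((k:ℤ)-1) g x‖

open scoped NNReal

/-! At the point `ε(a + t)`, with `a` a lattice point and `t ∈ [0, 1]²`, the value of `Ex f` is that
of the lattice function `f_t` obtained from `f` by the Fourier multiplier `w ↦ exp (iπε w·t)`, a
translation by a fraction of the lattice spacing, which factors over the two coordinates.
Integrating over `𝕋²` cell by cell, it suffices to bound `‖f_t‖_{L^p(Λ_ε)}` uniformly in `t`.

* The one-dimensional multiplier is convolution with a kernel whose value at `a` is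
  `O(1 / (1 + |a|))`, hence of `ℓ¹` norm `O(log N)`. By Young's inequality
  `‖f_t‖_{L^q} ≲ (log N)² ‖f‖_{L^q}` for all `q ≥ 1`, and `(log N)² ≲ ε^{-κ}`.
* Since `|exp (iθt) - 1| ≤ |exp (iθ) - 1|` for `t ∈ [0, 1]` and `|θ| ≤ π`, Parseval bounds
  `‖f_t - f‖_{L²}` by the `L²` norm of the discrete gradient of `f`, without loss.

Where `|f_t| > 2|f|` one has `|f_t| ≤ 2|f_t - f|`, so
`|f_t|^p ≤ (2|f|)^p + 2|f_t - f||f_t|^{p-1}` everywhere; summing, Cauchy–Schwarz turns the last term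
into `‖f_t - f‖_{L²} ‖f_t‖_{L^{2p-2}}^{p-1}`, and the claim follows on taking `p`-th roots.
-/

section DiscreteFourier

open scoped ZMod

variable {n : ℕ} [NeZero n]

lemma sum_dft_mul_eq_sum_mul_dft (Φ Ψ : ZMod n → ℂ) :
    ∑ k, 𝓕 Φ k * Ψ k = ∑ j, Φ j * 𝓕 Ψ j := by
  simp only [ZMod.dft_apply, smul_eq_mul, Finset.sum_mul, Finset.mul_sum]
  rw [Finset.sum_comm]
  refine Finset.sum_congr rfl fun j _ => Finset.sum_congr rfl fun k _ => ?_
  rw [mul_comm j k]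
  ring

lemma conj_dft_apply (Φ : ZMod n → ℂ) (k : ZMod n) :
    starRingEnd ℂ (𝓕 Φ k) = 𝓕 (fun j => starRingEnd ℂ (Φ (-j))) k := by
  rw [ZMod.dft_comp_neg (fun j => starRingEnd ℂ (Φ j))]
  simp only [ZMod.dft_apply, smul_eq_mul, map_sum, map_mul, ← AddChar.map_neg_eq_conj, mul_neg]

lemma sum_sq_norm_dft (Φ : ZMod n → ℂ) : ∑ k, ‖𝓕 Φ k‖ ^ 2 = n * ∑ j, ‖Φ j‖ ^ 2 := by
  have parseval : ∑ k, 𝓕 Φ k * starRingEnd ℂ (𝓕 Φ k) = n * ∑ j, Φ j * starRingEnd ℂ (Φ j) := by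
    simp only [conj_dft_apply]
    rw [sum_dft_mul_eq_sum_mul_dft Φ, ZMod.dft_dft, Finset.mul_sum]
    refine Finset.sum_congr rfl fun j _ => ?_
    simp only [neg_neg, smul_eq_mul]
    ring
  simp only [Complex.mul_conj, Complex.normSq_eq_norm_sq] at parseval
  exact_mod_cast parseval

lemma dft_comp_add_right (Φ : ZMod n → ℂ) (u k : ZMod n) :
    𝓕 (fun j => Φ (j + u)) k = ZMod.stdAddChar (k * u) * 𝓕 Φ k := by
  simp only [ZMod.dft_apply, smul_eq_mul, Finset.mul_sum]
  rw [← Equiv.sum_comp (Equiv.addRight u)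
    (fun j => ZMod.stdAddChar (k * u) * (ZMod.stdAddChar (-(j * k)) * Φ j))]
  refine Finset.sum_congr rfl fun j _ => ?_
  rw [Equiv.coe_addRight, ← mul_assoc, ← AddChar.map_add_eq_mul]
  ring_nf

lemma dft_mul_sum_mul {ι : Type*} (S : Finset ι) (c : ℂ) (σ : ι → ℂ) (Φ : ZMod n → ι → ℂ)
    (k : ZMod n) :
    𝓕 (fun j => c * ∑ i ∈ S, σ i * Φ j i) k = c * ∑ i ∈ S, σ i * 𝓕 (fun j => Φ j i) k := by
  simp only [ZMod.dft_apply, smul_eq_mul, Finset.mul_sum]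
  rw [Finset.sum_comm]
  refine Finset.sum_congr rfl fun i _ => Finset.sum_congr rfl fun j _ => ?_
  ring

/-- The Fourier multiplier with symbol `m` on functions on `ℤ/nℤ`. -/
def fourierMultiplier (m : ZMod n → ℂ) : (ZMod n → ℂ) →ₗ[ℂ] (ZMod n → ℂ) :=
  ZMod.dft.symm.toLinearMap ∘ₗ LinearMap.mulLeft ℂ m ∘ₗ ZMod.dft.toLinearMap

lemma fourierMultiplier_eq_invDFT (m h : ZMod n → ℂ) :
    fourierMultiplier m h = 𝓕⁻ (m * 𝓕 h) := rfl

lemma fourierMultiplier_eq_sum (m h : ZMod n → ℂ) (a : ZMod n) :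
    fourierMultiplier m h a = ∑ b, 𝓕⁻ m (a - b) * h b := by
  simp only [fourierMultiplier_eq_invDFT, ZMod.invDFT_apply, ZMod.dft_apply, Pi.mul_apply,
    smul_eq_mul, Finset.mul_sum, Finset.sum_mul]
  rw [Finset.sum_comm]
  refine Finset.sum_congr rfl fun b _ => Finset.sum_congr rfl fun w _ => ?_
  rw [show w * (a - b) = w * a + -(b * w) by ring, AddChar.map_add_eq_mul]
  ring

lemma fourierMultiplier_one (h : ZMod n → ℂ) : fourierMultiplier 1 h = h := by
  rw [fourierMultiplier_eq_invDFT, one_mul, LinearEquiv.symm_apply_apply]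

lemma fourierMultiplier_sub (m m' h : ZMod n → ℂ) :
    fourierMultiplier (m - m') h = fourierMultiplier m h - fourierMultiplier m' h := by
  simp only [fourierMultiplier_eq_invDFT, sub_mul, map_sub]

lemma fourierMultiplier_stdAddChar (h : ZMod n → ℂ) (u : ZMod n) :
    fourierMultiplier (fun w => ZMod.stdAddChar (w * u)) h = fun a => h (a + u) := by
  rw [fourierMultiplier_eq_invDFT, LinearEquiv.symm_apply_eq]
  exact funext fun w => (dft_comp_add_right h u w).symm

lemma sum_sq_norm_fourierMultiplier (m h : ZMod n → ℂ) :
    ∑ a, ‖fourierMultiplier m h a‖ ^ 2 = (n : ℝ)⁻¹ * ∑ w, (‖m w‖ * ‖𝓕 h w‖) ^ 2 := by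
  have hn : (n : ℝ) ≠ 0 := NeZero.ne _
  rw [eq_inv_mul_iff_mul_eq₀ hn, ← sum_sq_norm_dft, fourierMultiplier_eq_invDFT,
    LinearEquiv.apply_symm_apply]
  simp only [Pi.mul_apply, norm_mul]

lemma sum_sq_norm_fourierMultiplier_mono {m m' : ZMod n → ℂ} (hm : ∀ w, ‖m w‖ ≤ ‖m' w‖)
    (h : ZMod n → ℂ) :
    ∑ a, ‖fourierMultiplier m h a‖ ^ 2 ≤ ∑ a, ‖fourierMultiplier m' h a‖ ^ 2 := by
  simp only [sum_sq_norm_fourierMultiplier]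
  gcongr with w
  exact hm w

end DiscreteFourier

section Inequalities

lemma sum_rpow_norm_conv_le {G R : Type*} [AddGroup G] [Fintype G] [SeminormedRing R]
    (K f : G → R) {q : ℝ} (hq : 1 ≤ q) :
    ∑ z, ‖∑ y, K (z - y) * f y‖ ^ q ≤ (∑ y, ‖K y‖) ^ q * ∑ y, ‖f y‖ ^ q := by
  have hq0 : 0 < q := by linarith
  set S := ∑ y, ‖K y‖
  have hS : 0 ≤ S := by positivity
  have sum_left (z : G) : ∑ y, ‖K (z - y)‖ = S := Equiv.sum_comp (Equiv.subLeft z) (‖K ·‖)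
  have sum_right (y : G) : ∑ z, ‖K (z - y)‖ = S := Equiv.sum_comp (Equiv.subRight y) (‖K ·‖)
  have pointwise (z : G) :
      ‖∑ y, K (z - y) * f y‖ ^ q ≤ S ^ (q - 1) * ∑ y, ‖K (z - y)‖ * ‖f y‖ ^ q := by
    have hA : 0 ≤ ∑ y, ‖K (z - y)‖ * ‖f y‖ ^ q := by positivity
    calc ‖∑ y, K (z - y) * f y‖ ^ q
        ≤ (∑ y, ‖K (z - y)‖ * ‖f y‖) ^ q := by
          gcongr
          exact norm_sum_le_of_le _ fun y _ => norm_mul_le _ _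
      _ ≤ (S ^ (1 - q⁻¹) * (∑ y, ‖K (z - y)‖ * ‖f y‖ ^ q) ^ q⁻¹) ^ q := by
          gcongr
          have := Real.inner_le_weight_mul_Lp_of_nonneg Finset.univ hq (fun y => ‖K (z - y)‖)
            (fun y => ‖f y‖) (fun _ => norm_nonneg _) (fun _ => norm_nonneg _)
          rwa [sum_left] at this
      _ = S ^ (q - 1) * ∑ y, ‖K (z - y)‖ * ‖f y‖ ^ q := by
          rw [Real.mul_rpow (by positivity) (by positivity), ← Real.rpow_mul hS,
            Real.rpow_inv_rpow hA hq0.ne', sub_mul, inv_mul_cancel₀ hq0.ne', one_mul]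
  calc ∑ z, ‖∑ y, K (z - y) * f y‖ ^ q
      ≤ ∑ z, S ^ (q - 1) * ∑ y, ‖K (z - y)‖ * ‖f y‖ ^ q := Finset.sum_le_sum fun z _ => pointwise z
    _ = S ^ (q - 1) * ∑ y, (∑ z, ‖K (z - y)‖) * ‖f y‖ ^ q := by
        rw [← Finset.mul_sum, Finset.sum_comm]
        simp only [Finset.sum_mul]
    _ = S ^ (q - 1) * S * ∑ y, ‖f y‖ ^ q := by
        simp only [sum_right, ← Finset.mul_sum, mul_assoc]
    _ = S ^ q * ∑ y, ‖f y‖ ^ q := by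
        rw [← Real.rpow_add_one' hS (by linarith), sub_add_cancel]

variable {E : Type*} [SeminormedAddCommGroup E]

lemma rpow_norm_le_add_norm_sub_mul (a b : E) {p : ℝ} (hp : 0 < p) :
    ‖a‖ ^ p ≤ (2 * ‖b‖) ^ p + 2 * (‖a - b‖ * ‖a‖ ^ (p - 1)) := by
  rcases le_total ‖a‖ (2 * ‖b‖) with h | h
  · have : ‖a‖ ^ p ≤ (2 * ‖b‖) ^ p := by gcongr
    exact le_add_of_le_of_nonneg this (by positivity)
  · have hab : ‖a‖ ≤ 2 * ‖a - b‖ := by linarith [norm_le_norm_sub_add a b]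
    calc ‖a‖ ^ p = ‖a‖ * ‖a‖ ^ (p - 1) := by
          rw [mul_comm, ← Real.rpow_add_one' (norm_nonneg _) (by linarith), sub_add_cancel]
      _ ≤ 2 * ‖a - b‖ * ‖a‖ ^ (p - 1) := by gcongr
      _ ≤ (2 * ‖b‖) ^ p + 2 * (‖a - b‖ * ‖a‖ ^ (p - 1)) := by
          rw [mul_assoc]
          exact le_add_of_nonneg_left (by positivity)

lemma sum_rpow_norm_le_add_sqrt_mul_sqrt {ι : Type*} [Fintype ι] (f g : ι → E) {p : ℝ}
    (hp : 0 < p) :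
    ∑ i, ‖g i‖ ^ p ≤ 2 ^ p * ∑ i, ‖f i‖ ^ p +
      2 * (√(∑ i, ‖g i - f i‖ ^ 2) * √(∑ i, ‖g i‖ ^ (2 * p - 2))) := by
  have sq_rpow (i : ι) : (‖g i‖ ^ (p - 1)) ^ 2 = ‖g i‖ ^ (2 * p - 2) := by
    rw [← Real.rpow_mul_natCast (norm_nonneg _)]
    push_cast
    ring_nf
  calc ∑ i, ‖g i‖ ^ p
      ≤ ∑ i, ((2 * ‖f i‖) ^ p + 2 * (‖g i - f i‖ * ‖g i‖ ^ (p - 1))) :=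
        Finset.sum_le_sum fun i _ => rpow_norm_le_add_norm_sub_mul _ _ hp
    _ = 2 ^ p * ∑ i, ‖f i‖ ^ p + 2 * ∑ i, ‖g i - f i‖ * ‖g i‖ ^ (p - 1) := by
        simp only [Finset.sum_add_distrib, Finset.mul_sum,
          Real.mul_rpow zero_le_two (norm_nonneg _)]
    _ ≤ _ := by
        gcongr
        simpa only [sq_rpow] using Real.sum_mul_le_sqrt_mul_sqrt Finset.univ
          (fun i => ‖g i - f i‖) (fun i => ‖g i‖ ^ (p - 1))

end Inequalities

section LatticeNorms

variable {N : ℕ} [NeZero N] {E : Type*} [NormedAddCommGroup E]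

lemma dLp_ofReal (f : Lat N → E) {q : ℝ} (hq : 0 < q) :
    dLp N (ENNReal.ofReal q) f = (((N : ℝ) ^ 2)⁻¹ * ∑ z, ‖f z‖ ^ q) ^ (1 / q) := by
  rw [dLp, if_neg ENNReal.ofReal_ne_top, ENNReal.toReal_ofReal hq.le, Finset.mul_sum]

lemma dLp_ofReal_nonneg (f : Lat N → E) {q : ℝ} (hq : 0 < q) :
    0 ≤ dLp N (ENNReal.ofReal q) f := by
  rw [dLp_ofReal f hq]
  positivity

lemma dLp_ofReal_rpow (f : Lat N → E) {q : ℝ} (hq : 0 < q) :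
    dLp N (ENNReal.ofReal q) f ^ q = ((N : ℝ) ^ 2)⁻¹ * ∑ z, ‖f z‖ ^ q := by
  rw [dLp_ofReal f hq, one_div, Real.rpow_inv_rpow (by positivity) hq.ne']

lemma dLp_ofReal_two (f : Lat N → E) :
    dLp N (ENNReal.ofReal 2) f = √(((N : ℝ) ^ 2)⁻¹ * ∑ z, ‖f z‖ ^ 2) := by
  simp only [dLp_ofReal f two_pos, Real.sqrt_eq_rpow, Real.rpow_two]

lemma dLp_comp_ofReal (p : ℝ≥0∞) (f : Lat N → ℝ) :
    dLp N p (fun z => (f z : ℂ)) = dLp N p f := by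
  simp only [dLp, Complex.norm_real]

lemma dLp_le_mul_of_sum_rpow_norm_le {f g : Lat N → E} {c q : ℝ} (hc : 0 ≤ c) (hq : 0 < q)
    (h : ∑ z, ‖g z‖ ^ q ≤ c ^ q * ∑ z, ‖f z‖ ^ q) :
    dLp N (ENNReal.ofReal q) g ≤ c * dLp N (ENNReal.ofReal q) f := by
  have hf := dLp_ofReal_nonneg f hq
  refine (Real.rpow_le_rpow_iff (dLp_ofReal_nonneg g hq) (by positivity) hq).mp ?_
  rw [Real.mul_rpow hc hf, dLp_ofReal_rpow g hq, dLp_ofReal_rpow f hq, mul_left_comm]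
  gcongr

lemma dLp_comp_sub_right (f : Lat N → E) {q : ℝ} (hq : 0 < q) (v : Lat N) :
    dLp N (ENNReal.ofReal q) (fun z => f (z - v)) = dLp N (ENNReal.ofReal q) f := by
  rw [dLp_ofReal _ hq, dLp_ofReal _ hq, ← Equiv.sum_comp (Equiv.subRight v) fun z => ‖f z‖ ^ q]
  rfl

lemma dLp_rpow_le_add_mul (f g : Lat N → E) {p : ℝ} (hp : 1 < p) :
    dLp N (ENNReal.ofReal p) g ^ p ≤ (2 * dLp N (ENNReal.ofReal p) f) ^ p +
      2 * (dLp N (ENNReal.ofReal 2) (g - f) *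
        dLp N (ENNReal.ofReal (2 * p - 2)) g ^ (p - 1)) := by
  have hp0 : 0 < p := by linarith
  have hp2 : 0 < 2 * p - 2 := by linarith
  have sqrt_eq : dLp N (ENNReal.ofReal (2 * p - 2)) g ^ (p - 1) =
      √(((N : ℝ) ^ 2)⁻¹ * ∑ z, ‖g z‖ ^ (2 * p - 2)) := by
    rw [← dLp_ofReal_rpow g hp2, Real.sqrt_eq_rpow, ← Real.rpow_mul (dLp_ofReal_nonneg g hp2)]
    ring_nf
  rw [Real.mul_rpow zero_le_two (dLp_ofReal_nonneg f hp0), dLp_ofReal_rpow g hp0,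
    dLp_ofReal_rpow f hp0, sqrt_eq, dLp_ofReal_two, Real.sqrt_mul (by positivity),
    Real.sqrt_mul (by positivity), mul_mul_mul_comm, Real.mul_self_sqrt (by positivity)]
  simp only [Pi.sub_apply]
  calc ((N : ℝ) ^ 2)⁻¹ * ∑ z, ‖g z‖ ^ p
      ≤ ((N : ℝ) ^ 2)⁻¹ * (2 ^ p * ∑ z, ‖f z‖ ^ p +
        2 * (√(∑ z, ‖g z - f z‖ ^ 2) * √(∑ z, ‖g z‖ ^ (2 * p - 2)))) := by
        gcongr
        exact sum_rpow_norm_le_add_sqrt_mul_sqrt f g hp0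
    _ = _ := by ring

lemma dLp_le_two_mul_dLp_add_mul (f g : Lat N → E) {p : ℝ} (hp : 1 < p) :
    dLp N (ENNReal.ofReal p) g ≤ 2 * dLp N (ENNReal.ofReal p) f +
      2 * (dLp N (ENNReal.ofReal 2) (g - f) ^ (1 / p) *
        dLp N (ENNReal.ofReal (2 * p - 2)) g ^ (1 - 1 / p)) := by
  have hp0 : 0 < p := by linarith
  have hA := dLp_ofReal_nonneg g hp0
  have hB := dLp_ofReal_nonneg f hp0
  have hD := dLp_ofReal_nonneg (g - f) two_pos
  have hE := dLp_ofReal_nonneg g (by linarith : 0 < 2 * p - 2)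
  have hpow := dLp_rpow_le_add_mul f g hp
  set A := dLp N (ENNReal.ofReal p) g
  set B := dLp N (ENNReal.ofReal p) f
  set D := dLp N (ENNReal.ofReal 2) (g - f)
  set G := dLp N (ENNReal.ofReal (2 * p - 2)) g
  have hp1 : 1 / p ≤ 1 := (div_le_one hp0).mpr hp.le
  calc A = (A ^ p) ^ (1 / p) := by rw [one_div, Real.rpow_rpow_inv hA hp0.ne']
    _ ≤ ((2 * B) ^ p + 2 * (D * G ^ (p - 1))) ^ (1 / p) := by gcongr
    _ ≤ ((2 * B) ^ p) ^ (1 / p) + (2 * (D * G ^ (p - 1))) ^ (1 / p) :=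
        Real.rpow_add_le_add_rpow (by positivity) (by positivity) (by positivity) hp1
    _ = 2 * B + 2 ^ (1 / p) * (D ^ (1 / p) * G ^ (1 - 1 / p)) := by
        rw [← Real.rpow_mul (by positivity), mul_one_div_cancel hp0.ne', Real.rpow_one,
          Real.mul_rpow zero_le_two (by positivity), Real.mul_rpow hD (by positivity),
          ← Real.rpow_mul hE, sub_mul, mul_one_div_cancel hp0.ne', one_mul]
    _ ≤ 2 * B + 2 * (D ^ (1 / p) * G ^ (1 - 1 / p)) := by
        gcongr
        exact (Real.rpow_le_rpow_of_exponent_le one_le_two hp1).trans_eq (Real.rpow_one 2)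

/-- The nearest-neighbour energy `Σ_{|x-y|=ε} ε² ‖F(y)-F(x)‖²` of a vector-valued lattice field,
which is `nnSum` for real-valued fields. -/
def gradEnergy (N : ℕ) [NeZero N] {E : Type*} [NormedAddCommGroup E] (F : Lat N → E) : ℝ :=
  ∑ x : Lat N, ((N : ℝ) ^ 2)⁻¹ *
    (‖F (x + (1, 0)) - F x‖ ^ 2 + ‖F (x + (0, 1)) - F x‖ ^ 2 +
      ‖F (x - (1, 0)) - F x‖ ^ 2 + ‖F (x - (0, 1)) - F x‖ ^ 2)

lemma gradEnergy_comp_ofReal (f : Lat N → ℝ) :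
    gradEnergy N (fun z => (f z : ℂ)) = nnSum N f := by
  simp only [gradEnergy, nnSum, ← Complex.ofReal_sub, Complex.norm_real, Real.norm_eq_abs, sq_abs]

lemma gradEnergy_nonneg (F : Lat N → E) : 0 ≤ gradEnergy N F := by
  unfold gradEnergy
  positivity

lemma gradEnergy_eq_two_mul_sum_forward (F : Lat N → E) :
    gradEnergy N F = ((N : ℝ) ^ 2)⁻¹ *
      (2 * ∑ z, (‖F (z + (1, 0)) - F z‖ ^ 2 + ‖F (z + (0, 1)) - F z‖ ^ 2)) := by
  have backward_eq_forward (u : Lat N) :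
      ∑ z, ‖F (z - u) - F z‖ ^ 2 = ∑ z, ‖F (z + u) - F z‖ ^ 2 := by
    rw [← Equiv.sum_comp (Equiv.addRight u)]
    simp only [Equiv.coe_addRight, add_sub_cancel_right, norm_sub_rev]
  simp only [gradEnergy, ← Finset.mul_sum, Finset.sum_add_distrib, backward_eq_forward]
  ring

end LatticeNorms

section Exponentials

lemma norm_exp_I_mul_sub_one_mono {x y : ℝ} (hxy : |x| ≤ |y|) (hy : |y| ≤ Real.pi) :
    ‖Complex.exp (Complex.I * x) - 1‖ ≤ ‖Complex.exp (Complex.I * y) - 1‖ := by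
  have norm_eq (u : ℝ) (hu : |u| ≤ Real.pi) :
      ‖Complex.exp (Complex.I * u) - 1‖ = 2 * Real.sin (|u| / 2) := by
    rw [Complex.norm_exp_I_mul_ofReal_sub_one, Real.norm_eq_abs, abs_mul, abs_two,
      Real.abs_sin_eq_sin_abs_of_abs_le_pi, abs_div, abs_two]
    rw [abs_div, abs_two]
    linarith [abs_nonneg u]
  rw [norm_eq x (hxy.trans hy), norm_eq y hy]
  gcongr
  exact Real.sin_le_sin_of_le_of_le_pi_div_two (by linarith [abs_nonneg x, Real.pi_pos])
    (by linarith) (by linarith)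

lemma two_div_pi_mul_le_norm_exp_I_mul_sub_one {θ r : ℝ} (hr : 0 ≤ r) (hrθ : r ≤ θ)
    (hθr : θ ≤ 2 * Real.pi - r) :
    2 / Real.pi * r ≤ ‖Complex.exp (Complex.I * θ) - 1‖ := by
  have sin_ge : r / Real.pi ≤ Real.sin (θ / 2) := by
    have habs : |Real.pi / 2 - θ / 2| ≤ Real.pi / 2 - r / 2 := abs_le.mpr ⟨by linarith, by linarith⟩
    calc r / Real.pi = 1 - 2 / Real.pi * (Real.pi / 2 - r / 2) := by field_simp; ring
      _ ≤ 1 - 2 / Real.pi * |Real.pi / 2 - θ / 2| := by gcongr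
      _ ≤ Real.cos |Real.pi / 2 - θ / 2| :=
          Real.one_sub_mul_le_cos (abs_nonneg _) (habs.trans (by linarith))
      _ = Real.sin (θ / 2) := by rw [Real.cos_abs, Real.cos_pi_div_two_sub]
  rw [Complex.norm_exp_I_mul_ofReal_sub_one, Real.norm_eq_abs]
  calc 2 / Real.pi * r = 2 * (r / Real.pi) := by ring
    _ ≤ 2 * Real.sin (θ / 2) := by gcongr
    _ ≤ |2 * Real.sin (θ / 2)| := le_abs_self _

lemma norm_geom_sum_exp_I_mul_le {θ r : ℝ} (hr : 0 < r) (hrθ : r ≤ θ)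
    (hθr : θ ≤ 2 * Real.pi - r) (n : ℕ) :
    ‖∑ j ∈ Finset.range n, Complex.exp (Complex.I * θ) ^ j‖ ≤ Real.pi / r := by
  set z := Complex.exp (Complex.I * θ)
  have hz : ‖z‖ = 1 := Complex.norm_exp_I_mul_ofReal θ
  rw [le_div_iff₀ hr]
  have key : ‖∑ j ∈ Finset.range n, z ^ j‖ * (2 / Real.pi * r) ≤ 2 :=
    calc ‖∑ j ∈ Finset.range n, z ^ j‖ * (2 / Real.pi * r)
        ≤ ‖∑ j ∈ Finset.range n, z ^ j‖ * ‖z - 1‖ := by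
          gcongr
          exact two_div_pi_mul_le_norm_exp_I_mul_sub_one hr.le hrθ hθr
      _ = ‖z ^ n - 1‖ := by rw [← norm_mul, geom_sum_mul]
      _ ≤ ‖z ^ n‖ + ‖(1 : ℂ)‖ := norm_sub_le _ _
      _ = 2 := by rw [norm_pow, hz, one_pow, norm_one, one_add_one_eq_two]
  calc ‖∑ j ∈ Finset.range n, z ^ j‖ * r
      = ‖∑ j ∈ Finset.range n, z ^ j‖ * (2 / Real.pi * r) * (Real.pi / 2) := by field_simp
    _ ≤ 2 * (Real.pi / 2) := by gcongr
    _ = Real.pi := by ring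

end Exponentials

section Representatives

lemma sum_comp_val {n : ℕ} [NeZero n] {M : Type*} [AddCommMonoid M] (g : ℕ → M) :
    ∑ a : ZMod n, g a.val = ∑ j ∈ Finset.range n, g j := by
  obtain ⟨k, rfl⟩ := Nat.exists_eq_succ_of_ne_zero (NeZero.ne n)
  exact Fin.sum_univ_eq_sum_range g (k + 1)

variable {N : ℕ} [NeZero N]

lemma latRep_eq_valMinAbs (v : ZMod (2 * N)) : latRep N v = v.valMinAbs := by
  rw [latRep, ZMod.valMinAbs_def_pos, Nat.mul_div_cancel_left N two_pos]
  push_cast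
  simp only [Nat.cast_le]

lemma intCast_latRep (v : ZMod (2 * N)) : (latRep N v : ZMod (2 * N)) = v := by
  rw [latRep_eq_valMinAbs, ZMod.coe_valMinAbs]

lemma latRep_intCast {j : ℤ} (hj : j ∈ Set.Icc (1 - (N : ℤ)) N) :
    latRep N (j : ZMod (2 * N)) = j := by
  obtain ⟨h₁, h₂⟩ := hj
  rw [latRep_eq_valMinAbs, ZMod.valMinAbs_spec]
  exact ⟨rfl, by push_cast; omega, by push_cast; omega⟩

lemma abs_latRep_le (v : ZMod (2 * N)) : |(latRep N v : ℝ)| ≤ N := by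
  have h := ZMod.natAbs_valMinAbs_le v
  rw [← latRep_eq_valMinAbs, Nat.mul_div_cancel_left N two_pos] at h
  rw [← Int.cast_abs, Int.abs_eq_natAbs]
  exact_mod_cast h

lemma sum_comp_latRep {M : Type*} [AddCommMonoid M] (g : ℤ → M) :
    ∑ w : ZMod (2 * N), g (latRep N w) = ∑ j ∈ Finset.range (2 * N), g (1 - (N : ℤ) + j) := by
  rw [← sum_comp_val fun j : ℕ => g (1 - (N : ℤ) + j),
    ← Equiv.sum_comp (Equiv.addLeft ((1 - (N : ℤ) : ℤ) : ZMod (2 * N)))]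
  refine Finset.sum_congr rfl fun w _ => ?_
  have hw := ZMod.val_lt w
  have shift_eq : ((1 - (N : ℤ) : ℤ) : ZMod (2 * N)) + w = ((1 - (N : ℤ) + w.val : ℤ) : _) := by
    push_cast
    rw [ZMod.natCast_zmod_val]
  simp only [Equiv.coe_addLeft]
  rw [shift_eq, latRep_intCast ⟨by omega, by omega⟩]

end Representatives

section FractionalShift

open scoped ZMod

variable {N : ℕ}

/-- The symbol `w ↦ exp (iπ w t / N)`, `w ∈ {1-N, …, N}`, of the translation by `t` lattice
spacings; unlike for integers, for fractional `t` it depends on the chosen representatives `w`. -/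
def shiftSymbol (N : ℕ) (t : ℝ) (w : ZMod (2 * N)) : ℂ :=
  Complex.exp (Complex.I * ((Real.pi * latRep N w / N * t : ℝ) : ℂ))

lemma norm_shiftSymbol (t : ℝ) (w : ZMod (2 * N)) : ‖shiftSymbol N t w‖ = 1 :=
  Complex.norm_exp_I_mul_ofReal _

lemma shiftSymbol_add (s t : ℝ) (w : ZMod (2 * N)) :
    shiftSymbol N (s + t) w = shiftSymbol N s w * shiftSymbol N t w := by
  simp only [shiftSymbol, ← Complex.exp_add, ← mul_add, Complex.ofReal_mul, Complex.ofReal_add]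

variable [NeZero N]

lemma shiftSymbol_intCast (m : ℤ) (w : ZMod (2 * N)) :
    shiftSymbol N m w = ZMod.stdAddChar (w * (m : ZMod (2 * N))) := by
  have hN : (N : ℂ) ≠ 0 := NeZero.ne _
  have product_eq : w * (m : ZMod (2 * N)) = ((latRep N w * m : ℤ) : ZMod (2 * N)) := by
    rw [Int.cast_mul, intCast_latRep]
  rw [product_eq, ZMod.stdAddChar_coe, shiftSymbol]
  congr 1
  push_cast
  field_simp

lemma shiftSymbol_intCast_add (m : ℤ) (t : ℝ) (w : ZMod (2 * N)) :
    shiftSymbol N (m + t) w = ZMod.stdAddChar (w * (m : ZMod (2 * N))) * shiftSymbol N t w := by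
  rw [shiftSymbol_add, shiftSymbol_intCast]

lemma norm_shiftSymbol_sub_one_le {t : ℝ} (ht : t ∈ Set.Icc (0 : ℝ) 1) (w : ZMod (2 * N)) :
    ‖shiftSymbol N t w - 1‖ ≤ ‖ZMod.stdAddChar (w * 1) - 1‖ := by
  have hN : (0 : ℝ) < N := Nat.cast_pos.mpr (NeZero.pos N)
  have angle_le : |Real.pi * latRep N w / N| ≤ Real.pi := by
    rw [abs_div, abs_mul, abs_of_pos Real.pi_pos, abs_of_pos hN, mul_div_assoc]
    exact mul_le_of_le_one_right Real.pi_pos.le ((div_le_one hN).mpr (abs_latRep_le w))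
  have := shiftSymbol_intCast 1 w
  rw [Int.cast_one, Int.cast_one] at this
  rw [← this, shiftSymbol, shiftSymbol, mul_one]
  refine norm_exp_I_mul_sub_one_mono ?_ angle_le
  rw [abs_mul, abs_of_nonneg ht.1]
  exact mul_le_of_le_one_right (abs_nonneg _) ht.2

/-- Translation of a function on `ℤ/2Nℤ` by `t ∈ ℝ` lattice spacings, i.e. evaluation at `a + t` of
its trigonometric interpolation with frequencies in `{1-N, …, N}`. -/
def fracShift (N : ℕ) [NeZero N] (t : ℝ) : (ZMod (2 * N) → ℂ) →ₗ[ℂ] (ZMod (2 * N) → ℂ) :=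
  fourierMultiplier (shiftSymbol N t)

lemma fracShift_intCast (t : ℝ) (h : ZMod (2 * N) → ℂ) (m : ℤ) :
    fracShift N t h m = (2 * N : ℂ)⁻¹ * ∑ w, shiftSymbol N (m + t) w * 𝓕 h w := by
  simp only [fracShift, fourierMultiplier_eq_invDFT, ZMod.invDFT_apply, Pi.mul_apply, smul_eq_mul,
    shiftSymbol_intCast_add, mul_assoc, Nat.cast_mul, Nat.cast_ofNat]

lemma sum_sq_norm_fracShift_le (t : ℝ) (h : ZMod (2 * N) → ℂ) :
    ∑ a, ‖fracShift N t h a‖ ^ 2 ≤ ∑ a, ‖h a‖ ^ 2 := by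
  have := sum_sq_norm_fourierMultiplier_mono (m' := 1)
    (fun w => by rw [norm_shiftSymbol t w, Pi.one_apply, norm_one]) h
  rwa [fourierMultiplier_one] at this

lemma sum_sq_norm_fracShift_sub_le {t : ℝ} (ht : t ∈ Set.Icc (0 : ℝ) 1)
    (h : ZMod (2 * N) → ℂ) :
    ∑ a, ‖fracShift N t h a - h a‖ ^ 2 ≤ ∑ a, ‖h (a + 1) - h a‖ ^ 2 := by
  have := sum_sq_norm_fourierMultiplier_mono (m := shiftSymbol N t - 1)
    (m' := (fun w => ZMod.stdAddChar (w * 1)) - 1) (norm_shiftSymbol_sub_one_le ht) h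
  simpa only [fracShift, fourierMultiplier_sub, fourierMultiplier_one, fourierMultiplier_stdAddChar,
    Pi.sub_apply] using this

lemma norm_sum_shiftSymbol_le_two_mul (s : ℝ) : ‖∑ w, shiftSymbol N s w‖ ≤ 2 * N := by
  refine (norm_sum_le _ _).trans_eq ?_
  simp only [norm_shiftSymbol, Finset.sum_const, Finset.card_univ, ZMod.card, nsmul_eq_mul,
    mul_one, Nat.cast_mul, Nat.cast_ofNat]

lemma norm_sum_shiftSymbol_le_div {s r : ℝ} (hr : 0 < r) (hrs : r ≤ s) (hsr : s ≤ 2 * N - r) :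
    ‖∑ w, shiftSymbol N s w‖ ≤ N / r := by
  have hN : (0 : ℝ) < N := Nat.cast_pos.mpr (NeZero.pos N)
  set θ : ℝ := Real.pi / N * s with hθ
  have sum_eq : ∑ w, shiftSymbol N s w = Complex.exp (Complex.I * ((1 - N) * θ : ℝ)) *
      ∑ j ∈ Finset.range (2 * N), Complex.exp (Complex.I * θ) ^ j := by
    have := sum_comp_latRep (N := N)
      fun j : ℤ => Complex.exp (Complex.I * ((Real.pi * j / N * s : ℝ) : ℂ))
    rw [Finset.mul_sum]
    refine this.trans (Finset.sum_congr rfl fun j _ => ?_)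
    rw [← Complex.exp_nat_mul, ← Complex.exp_add, hθ]
    congr 1
    push_cast
    ring
  rw [sum_eq, norm_mul, Complex.norm_exp_I_mul_ofReal, one_mul]
  have hrθ : Real.pi / N * r ≤ θ := mul_le_mul_of_nonneg_left hrs (by positivity)
  have hθr : θ ≤ 2 * Real.pi - Real.pi / N * r :=
    calc θ ≤ Real.pi / N * (2 * N - r) := mul_le_mul_of_nonneg_left hsr (by positivity)
      _ = 2 * Real.pi - Real.pi / N * r := by field_simp
  exact (norm_geom_sum_exp_I_mul_le (by positivity) hrθ hθr _).trans_eq (by field_simp)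

lemma norm_invDFT_shiftSymbol (t : ℝ) (a : ZMod (2 * N)) :
    ‖𝓕⁻ (shiftSymbol N t) a‖ = (2 * N : ℝ)⁻¹ * ‖∑ w, shiftSymbol N (a.val + t) w‖ := by
  have := shiftSymbol_intCast_add (N := N) a.val t
  simp only [Int.cast_natCast, ZMod.natCast_zmod_val] at this
  simp only [ZMod.invDFT_apply, smul_eq_mul, norm_mul, norm_inv, this, Complex.norm_natCast,
    Nat.cast_mul, Nat.cast_ofNat, Complex.norm_ofNat]

lemma norm_invDFT_shiftSymbol_le_one (t : ℝ) (a : ZMod (2 * N)) :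
    ‖𝓕⁻ (shiftSymbol N t) a‖ ≤ 1 := by
  have hN : (0 : ℝ) < N := Nat.cast_pos.mpr (NeZero.pos N)
  rw [norm_invDFT_shiftSymbol, inv_mul_le_one₀ (by positivity)]
  exact norm_sum_shiftSymbol_le_two_mul _

lemma norm_invDFT_shiftSymbol_le_one_div {t r : ℝ} {a : ZMod (2 * N)} (hr : 0 < r)
    (hra : r ≤ a.val + t) (har : a.val + t ≤ 2 * N - r) :
    ‖𝓕⁻ (shiftSymbol N t) a‖ ≤ 1 / (2 * r) := by
  have hN : (0 : ℝ) < N := Nat.cast_pos.mpr (NeZero.pos N)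
  rw [norm_invDFT_shiftSymbol, inv_mul_le_iff₀ (by positivity)]
  exact (norm_sum_shiftSymbol_le_div hr hra har).trans_eq (by field_simp)

lemma norm_invDFT_shiftSymbol_le {t : ℝ} (ht : t ∈ Set.Icc (0 : ℝ) 1) (a : ZMod (2 * N)) :
    ‖𝓕⁻ (shiftSymbol N t) a‖ ≤ 1 / (a.val + 1) + 1 / (2 * N - a.val) := by
  obtain ⟨ht0, ht1⟩ := ht
  have ha : (a.val : ℝ) + 1 ≤ 2 * N := by exact_mod_cast ZMod.val_lt a
  have hleft : 0 ≤ 1 / ((a.val : ℝ) + 1) := by positivity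
  have hright : 0 ≤ 1 / (2 * N - (a.val : ℝ)) := one_div_nonneg.mpr (by linarith)
  have le_one := norm_invDFT_shiftSymbol_le_one t a
  obtain hv0 | hv1 : a.val = 0 ∨ 1 ≤ a.val := by omega
  · simp only [hv0, Nat.cast_zero, zero_add, div_one] at hright ⊢
    linarith
  obtain hvN | hv2 : a.val + 1 = 2 * N ∨ a.val + 2 ≤ 2 * N := by have := ZMod.val_lt a; omega
  · have : (2 * N - a.val : ℝ) = 1 := by rw [sub_eq_iff_eq_add']; exact_mod_cast hvN.symm
    rw [this, div_one]
    linarith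
  replace hv1 : (1 : ℝ) ≤ a.val := by exact_mod_cast hv1
  replace hv2 : (a.val : ℝ) + 2 ≤ 2 * N := by exact_mod_cast hv2
  rcases le_total (a.val + t) N with h | h
  · calc ‖𝓕⁻ (shiftSymbol N t) a‖ ≤ 1 / (2 * a.val) :=
          norm_invDFT_shiftSymbol_le_one_div (by linarith) (by linarith) (by linarith)
      _ ≤ 1 / (a.val + 1) := one_div_le_one_div_of_le (by linarith) (by linarith)
      _ ≤ _ := le_add_of_nonneg_right hright
  · calc ‖𝓕⁻ (shiftSymbol N t) a‖ ≤ 1 / (2 * (2 * N - 1 - a.val)) :=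
          norm_invDFT_shiftSymbol_le_one_div (by linarith) (by linarith) (by linarith)
      _ ≤ 1 / (2 * N - a.val) := one_div_le_one_div_of_le (by linarith) (by linarith)
      _ ≤ _ := le_add_of_nonneg_left hleft

/-- An upper bound, logarithmic in `N`, for the `ℓ¹` norms of the convolution kernels of the
translations by `t ∈ [0, 1]` lattice spacings; the analogue of a Lebesgue constant. -/
def lebesgueBound (N : ℕ) : ℝ := 2 * (1 + Real.log (2 * N))

lemma one_le_lebesgueBound : 1 ≤ lebesgueBound N := by
  have hN : (1 : ℝ) ≤ N := Nat.one_le_cast.mpr (NeZero.pos N)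
  have := Real.log_nonneg (x := 2 * N) (by linarith)
  unfold lebesgueBound
  linarith

lemma sum_norm_invDFT_shiftSymbol_le {t : ℝ} (ht : t ∈ Set.Icc (0 : ℝ) 1) :
    ∑ a, ‖𝓕⁻ (shiftSymbol N t) a‖ ≤ lebesgueBound N := by
  have harmonic_le : ∑ j ∈ Finset.range (2 * N), 1 / ((j : ℝ) + 1) ≤ 1 + Real.log (2 * N) := by
    simpa only [harmonic, one_div, Rat.cast_sum, Rat.cast_inv, Rat.cast_add, Rat.cast_natCast,
      Rat.cast_one, Nat.cast_add, Nat.cast_mul, Nat.cast_one, Nat.cast_ofNat]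
      using harmonic_le_one_add_log (2 * N)
  have reflect : ∑ j ∈ Finset.range (2 * N), 1 / ((2 : ℝ) * N - j) =
      ∑ j ∈ Finset.range (2 * N), 1 / ((j : ℝ) + 1) := by
    rw [← Finset.sum_range_reflect]
    refine Finset.sum_congr rfl fun j hj => ?_
    rw [Nat.sub_sub, Nat.cast_sub (by have := Finset.mem_range.mp hj; omega)]
    push_cast
    ring_nf
  calc ∑ a, ‖𝓕⁻ (shiftSymbol N t) a‖
      ≤ ∑ a : ZMod (2 * N), (1 / ((a.val : ℝ) + 1) + 1 / (2 * N - a.val)) :=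
        Finset.sum_le_sum fun a _ => norm_invDFT_shiftSymbol_le ht a
    _ = 2 * ∑ j ∈ Finset.range (2 * N), 1 / ((j : ℝ) + 1) := by
        rw [sum_comp_val fun j : ℕ => 1 / ((j : ℝ) + 1) + 1 / (2 * N - j), Finset.sum_add_distrib,
          reflect, ← two_mul]
    _ ≤ lebesgueBound N := by
        unfold lebesgueBound
        gcongr

lemma sq_lebesgueBound_le {κ : ℝ} (hκ : 0 < κ) :
    lebesgueBound N ^ 2 ≤ (2 * (1 + 2 ^ (κ / 2) / (κ / 2))) ^ 2 * (N : ℝ) ^ κ := by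
  have hN : (1 : ℝ) ≤ N := Nat.one_le_cast.mpr (NeZero.pos N)
  have hlog : Real.log (2 * N) ≤ 2 ^ (κ / 2) * (N : ℝ) ^ (κ / 2) / (κ / 2) := by
    rw [← Real.mul_rpow zero_le_two (by positivity)]
    exact Real.log_le_rpow_div (by positivity) (by positivity)
  have sq_rpow : ((N : ℝ) ^ (κ / 2)) ^ 2 = (N : ℝ) ^ κ := by
    rw [← Real.rpow_mul_natCast (by positivity), Nat.cast_ofNat, div_mul_cancel₀ κ two_ne_zero]
  have hone : 1 ≤ (N : ℝ) ^ (κ / 2) := Real.one_le_rpow hN (by positivity)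
  rw [← sq_rpow, ← mul_pow]
  refine pow_le_pow_left₀ (zero_le_one.trans one_le_lebesgueBound) ?_ 2
  calc lebesgueBound N
      ≤ 2 * ((N : ℝ) ^ (κ / 2) + 2 ^ (κ / 2) * (N : ℝ) ^ (κ / 2) / (κ / 2)) := by
        unfold lebesgueBound
        gcongr
    _ = _ := by ring

lemma sum_rpow_norm_fracShift_le {t : ℝ} (ht : t ∈ Set.Icc (0 : ℝ) 1) {q : ℝ} (hq : 1 ≤ q)
    (h : ZMod (2 * N) → ℂ) :
    ∑ a, ‖fracShift N t h a‖ ^ q ≤ lebesgueBound N ^ q * ∑ a, ‖h a‖ ^ q := by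
  simp only [fracShift, fourierMultiplier_eq_sum]
  refine (sum_rpow_norm_conv_le _ h hq).trans ?_
  gcongr
  exact sum_norm_invDFT_shiftSymbol_le ht

end FractionalShift

section FractionalShift₂

variable {N : ℕ} [NeZero N]

/-- Translation of a function on `Λ_N` by the fractional vector `(t, s)`: `fracShift` in each of
the two coordinates. -/
def fracShift₂ (N : ℕ) [NeZero N] (t s : ℝ) (F : Lat N → ℂ) (z : Lat N) : ℂ :=
  fracShift N t (fun a => fracShift N s (fun b => F (a, b)) z.2) z.1

lemma sum_rpow_norm_fracShift₂_le {t s : ℝ} (ht : t ∈ Set.Icc (0 : ℝ) 1)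
    (hs : s ∈ Set.Icc (0 : ℝ) 1) {q : ℝ} (hq : 1 ≤ q) (F : Lat N → ℂ) :
    ∑ z, ‖fracShift₂ N t s F z‖ ^ q ≤ (lebesgueBound N ^ 2) ^ q * ∑ z, ‖F z‖ ^ q := by
  have hL : 0 ≤ lebesgueBound N := zero_le_one.trans one_le_lebesgueBound
  calc ∑ z, ‖fracShift₂ N t s F z‖ ^ q
      = ∑ b, ∑ a, ‖fracShift N t (fun a' => fracShift N s (fun b' => F (a', b')) b) a‖ ^ q := by
        simp only [Fintype.sum_prod_type_right, fracShift₂]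
    _ ≤ ∑ b, lebesgueBound N ^ q * ∑ a, ‖fracShift N s (fun b' => F (a, b')) b‖ ^ q := by
        gcongr with b
        exact sum_rpow_norm_fracShift_le ht hq fun a => fracShift N s (fun b' => F (a, b')) b
    _ = lebesgueBound N ^ q * ∑ a, ∑ b, ‖fracShift N s (fun b' => F (a, b')) b‖ ^ q := by
        rw [← Finset.mul_sum, Finset.sum_comm]
    _ ≤ lebesgueBound N ^ q * ∑ a, lebesgueBound N ^ q * ∑ b, ‖F (a, b)‖ ^ q := by
        gcongr with a
        exact sum_rpow_norm_fracShift_le hs hq fun b => F (a, b)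
    _ = (lebesgueBound N ^ 2) ^ q * ∑ z, ‖F z‖ ^ q := by
        rw [← Finset.mul_sum, ← mul_assoc, ← Real.mul_rpow hL hL, ← sq, Fintype.sum_prod_type]

lemma dLp_fracShift₂_le {t s : ℝ} (ht : t ∈ Set.Icc (0 : ℝ) 1) (hs : s ∈ Set.Icc (0 : ℝ) 1)
    {q : ℝ} (hq : 1 ≤ q) (F : Lat N → ℂ) :
    dLp N (ENNReal.ofReal q) (fracShift₂ N t s F) ≤
      lebesgueBound N ^ 2 * dLp N (ENNReal.ofReal q) F :=
  dLp_le_mul_of_sum_rpow_norm_le (sq_nonneg _) (by linarith)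
    (sum_rpow_norm_fracShift₂_le ht hs hq F)

lemma fracShift₂_sub_self (t s : ℝ) (F : Lat N → ℂ) (a b : ZMod (2 * N)) :
    fracShift₂ N t s F (a, b) - F (a, b) =
      fracShift N t (fun a' => fracShift N s (fun b' => F (a', b')) b - F (a', b)) a +
        (fracShift N t (fun a' => F (a', b)) a - F (a, b)) := by
  have := congrFun (map_sub (fracShift N t) (fun a' => fracShift N s (fun b' => F (a', b')) b)
    fun a' => F (a', b)) a
  rw [Pi.sub_apply] at this
  rw [fracShift₂, ← sub_add_sub_cancel, ← this]
  rfl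

lemma sum_sq_norm_fracShift₂_sub_le {t s : ℝ} (ht : t ∈ Set.Icc (0 : ℝ) 1)
    (hs : s ∈ Set.Icc (0 : ℝ) 1) (F : Lat N → ℂ) :
    ∑ z, ‖fracShift₂ N t s F z - F z‖ ^ 2 ≤
      2 * ∑ z, (‖F (z + (1, 0)) - F z‖ ^ 2 + ‖F (z + (0, 1)) - F z‖ ^ 2) := by
  let vert (a b : ZMod (2 * N)) : ℂ := fracShift N s (fun b' => F (a, b')) b - F (a, b)
  let horiz (a b : ZMod (2 * N)) : ℂ := fracShift N t (fun a' => F (a', b)) a - F (a, b)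
  have vert_le : ∑ b, ∑ a, ‖fracShift N t (fun a' => vert a' b) a‖ ^ 2 ≤
      ∑ a, ∑ b, ‖F (a, b + 1) - F (a, b)‖ ^ 2 :=
    calc ∑ b, ∑ a, ‖fracShift N t (fun a' => vert a' b) a‖ ^ 2
        ≤ ∑ b, ∑ a, ‖vert a b‖ ^ 2 :=
          Finset.sum_le_sum fun b _ => sum_sq_norm_fracShift_le t fun a => vert a b
      _ = ∑ a, ∑ b, ‖vert a b‖ ^ 2 := by rw [Finset.sum_comm]
      _ ≤ ∑ a, ∑ b, ‖F (a, b + 1) - F (a, b)‖ ^ 2 :=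
          Finset.sum_le_sum fun a _ => sum_sq_norm_fracShift_sub_le hs fun b => F (a, b)
  have horiz_le : ∑ b, ∑ a, ‖horiz a b‖ ^ 2 ≤ ∑ b, ∑ a, ‖F (a + 1, b) - F (a, b)‖ ^ 2 :=
    Finset.sum_le_sum fun b _ => sum_sq_norm_fracShift_sub_le ht fun a => F (a, b)
  calc ∑ z, ‖fracShift₂ N t s F z - F z‖ ^ 2
      ≤ ∑ b, ∑ a, 2 * (‖fracShift N t (fun a' => vert a' b) a‖ ^ 2 + ‖horiz a b‖ ^ 2) := by
        rw [Fintype.sum_prod_type_right]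
        gcongr with b _ a
        rw [fracShift₂_sub_self]
        exact (pow_le_pow_left₀ (norm_nonneg _) (norm_add_le _ _) 2).trans add_sq_le
    _ = 2 * (∑ b, ∑ a, ‖fracShift N t (fun a' => vert a' b) a‖ ^ 2 +
          ∑ b, ∑ a, ‖horiz a b‖ ^ 2) := by
        simp only [← Finset.mul_sum, Finset.sum_add_distrib]
    _ ≤ 2 * (∑ a, ∑ b, ‖F (a, b + 1) - F (a, b)‖ ^ 2 +
          ∑ b, ∑ a, ‖F (a + 1, b) - F (a, b)‖ ^ 2) := by gcongr
    _ = 2 * ∑ z, (‖F (z + (1, 0)) - F z‖ ^ 2 + ‖F (z + (0, 1)) - F z‖ ^ 2) := by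
        rw [Finset.sum_comm (s := Finset.univ (α := ZMod (2 * N))), Finset.sum_add_distrib,
          add_comm]
        simp only [Fintype.sum_prod_type_right, Prod.mk_add_mk, add_zero]

lemma dLp_two_fracShift₂_sub_le {t s : ℝ} (ht : t ∈ Set.Icc (0 : ℝ) 1)
    (hs : s ∈ Set.Icc (0 : ℝ) 1) (F : Lat N → ℂ) :
    dLp N (ENNReal.ofReal 2) (fracShift₂ N t s F - F) ≤ √(gradEnergy N F) := by
  rw [dLp_ofReal_two, gradEnergy_eq_two_mul_sum_forward]
  gcongr
  exact sum_sq_norm_fracShift₂_sub_le ht hs F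

end FractionalShift₂

section Extension

open scoped ZMod

variable {N : ℕ}

lemma eW_latRep2 (w : Lat N) (x y : ℝ) :
    eW (latRep2 N w) (x / N, y / N) = shiftSymbol N x w.1 * shiftSymbol N y w.2 := by
  rw [eW, latRep2, shiftSymbol, shiftSymbol, ← Complex.exp_add]
  congr 1
  push_cast
  ring

variable [NeZero N]

lemma eW_latRep2_latPt (w z : Lat N) :
    eW (latRep2 N w) (latPt N z) = ZMod.stdAddChar (w.1 * z.1) * ZMod.stdAddChar (w.2 * z.2) := by
  rw [latPt, eW_latRep2, shiftSymbol_intCast, shiftSymbol_intCast, intCast_latRep, intCast_latRep]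

lemma dFT_latRep2 (F : Lat N → ℂ) (w : Lat N) :
    dFT N F (latRep2 N w) = ((N : ℂ) ^ 2)⁻¹ * 𝓕 (fun a => 𝓕 (fun b => F (a, b)) w.2) w.1 := by
  simp only [dFT, eW_latRep2_latPt, map_mul, ← AddChar.map_neg_eq_conj, ZMod.dft_apply,
    smul_eq_mul, Finset.mul_sum, Fintype.sum_prod_type, mul_comm w.1, mul_comm w.2]
  refine Finset.sum_congr rfl fun a _ => Finset.sum_congr rfl fun b _ => ?_
  ring

lemma Ex_eq_fracShift₂ (F : Lat N → ℂ) (m n : ℤ) (t s : ℝ) :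
    Ex N F ((m + t) / N, (n + s) / N) = fracShift₂ N t s F (m, n) := by
  have hN : (N : ℂ) ≠ 0 := NeZero.ne _
  simp only [Ex, fracShift₂, fracShift_intCast, dFT_latRep2, eW_latRep2, dft_mul_sum_mul]
  simp only [Finset.mul_sum, Fintype.sum_prod_type]
  refine Finset.sum_congr rfl fun w _ => Finset.sum_congr rfl fun w' _ => ?_
  field_simp
  ring

lemma continuous_Ex (F : Lat N → ℂ) : Continuous (Ex N F) := by
  unfold Ex eW
  fun_prop

lemma Ex_latPt_add (F : Lat N → ℂ) (z : Lat N) (u : ℝ × ℝ) :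
    Ex N F (latPt N z + u) = fracShift₂ N (1 + N * u.1) (1 + N * u.2) F (z - (1, 1)) := by
  have hN : (N : ℝ) ≠ 0 := NeZero.ne _
  have point_eq : latPt N z + u = (((latRep N z.1 - 1 : ℤ) + (1 + N * u.1)) / N,
      ((latRep N z.2 - 1 : ℤ) + (1 + N * u.2)) / N) := by
    ext <;> (simp only [latPt, Prod.fst_add, Prod.snd_add]; push_cast; field_simp; ring)
  rw [point_eq, Ex_eq_fracShift₂]
  congr 1
  ext <;> simp [intCast_latRep]

end Extension

section Cells

variable {N : ℕ}

/-- The cell `[-ε, 0]²`; its translates by the points of `Λ_ε` cover `𝕋²`, overlapping only along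
edges. -/
def latCell (N : ℕ) : Set (ℝ × ℝ) := Set.Icc (-(1 / N : ℝ)) 0 ×ˢ Set.Icc (-(1 / N : ℝ)) 0

lemma measurableSet_latCell : MeasurableSet (latCell N) :=
  measurableSet_Icc.prod measurableSet_Icc

lemma volume_latCell : volume (latCell N) = ENNReal.ofReal (((N : ℝ) ^ 2)⁻¹) := by
  rw [latCell, Measure.volume_eq_prod, Measure.prod_prod, Real.volume_Icc,
    ← ENNReal.ofReal_mul (by simp)]
  ring_nf

variable [NeZero N]

lemma exists_sub_latRep_div_mem {x : ℝ} (hx : x ∈ Set.Icc (-1 : ℝ) 1) :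
    ∃ a : ZMod (2 * N), x - latRep N a / N ∈ Set.Icc (-(1 / N : ℝ)) 0 := by
  have hN : (0 : ℝ) < N := Nat.cast_pos.mpr (NeZero.pos N)
  have hxN : x * N ∈ Set.Icc (-N : ℝ) N := ⟨by nlinarith [hx.1], by nlinarith [hx.2]⟩
  have hceil : ⌈x * N⌉ ≤ (N : ℤ) := Int.ceil_le.mpr (by exact_mod_cast hxN.2)
  have hNZ := NeZero.pos N
  obtain ⟨j, hj, hle, hlt⟩ :
      ∃ j ∈ Set.Icc (1 - (N : ℤ)) N, x * N ≤ j ∧ (j : ℝ) - 1 ≤ x * N := by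
    rcases le_total (1 - (N : ℤ)) ⌈x * N⌉ with h | h
    · exact ⟨_, ⟨h, hceil⟩, Int.le_ceil _, by linarith [Int.ceil_lt_add_one (x * N)]⟩
    · refine ⟨1 - N, ⟨le_rfl, by omega⟩, ?_, ?_⟩
      · exact (Int.le_ceil _).trans (by exact_mod_cast h)
      · push_cast
        linarith [hxN.1]
  refine ⟨j, ?_⟩
  rw [latRep_intCast hj, Set.mem_Icc, neg_le_sub_iff_le_add, sub_nonpos, ← sub_le_iff_le_add,
    ← sub_div, div_le_iff₀ hN, le_div_iff₀ hN]
  exact ⟨hlt, hle⟩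

lemma box_subset_iUnion_latCell : box ⊆ ⋃ z : Lat N, (fun x => x - latPt N z) ⁻¹' latCell N := by
  rintro ⟨x, y⟩ ⟨hx, hy⟩
  obtain ⟨a, ha⟩ := exists_sub_latRep_div_mem (N := N) hx
  obtain ⟨b, hb⟩ := exists_sub_latRep_div_mem (N := N) hy
  exact Set.mem_iUnion.mpr ⟨(a, b), ha, hb⟩

lemma lintegral_box_le_of_forall_latCell {Φ : ℝ × ℝ → ℝ≥0∞} (hΦ : Measurable Φ) {R : ℝ≥0∞}
    (hR : ∀ u ∈ latCell N, ∑ z : Lat N, Φ (latPt N z + u) ≤ R) :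
    ∫⁻ x in box, Φ x ≤ R * ENNReal.ofReal (((N : ℝ) ^ 2)⁻¹) := by
  have translate (z : Lat N) :
      ∫⁻ x in (fun x => x - latPt N z) ⁻¹' latCell N, Φ x =
        ∫⁻ u in latCell N, Φ (latPt N z + u) := by
    have hsub := measurePreserving_sub_right (volume : Measure (ℝ × ℝ)) (latPt N z)
    simpa only [add_sub_cancel] using hsub.setLIntegral_comp_preimage
      (measurableSet_latCell (N := N)) (f := fun u => Φ (latPt N z + u))
      (hΦ.comp (measurable_const_add _))
  calc ∫⁻ x in box, Φ x
      ≤ ∫⁻ x in ⋃ z : Lat N, (fun x => x - latPt N z) ⁻¹' latCell N, Φ x :=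
        lintegral_mono_set box_subset_iUnion_latCell
    _ ≤ ∑' z : Lat N, ∫⁻ x in (fun x => x - latPt N z) ⁻¹' latCell N, Φ x :=
        lintegral_iUnion_le _ _
    _ = ∑ z : Lat N, ∫⁻ u in latCell N, Φ (latPt N z + u) := by
        simp only [tsum_fintype, translate]
    _ = ∫⁻ u in latCell N, ∑ z : Lat N, Φ (latPt N z + u) :=
        (lintegral_finsetSum _ fun z _ => hΦ.comp (measurable_const_add _)).symm
    _ ≤ ∫⁻ _ in latCell N, R := setLIntegral_mono measurable_const hR
    _ = R * ENNReal.ofReal (((N : ℝ) ^ 2)⁻¹) := by rw [setLIntegral_const, volume_latCell]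

lemma cLp_le_of_forall_latCell {E : Type*} [NormedAddCommGroup E] {g : ℝ × ℝ → E}
    (hg : StronglyMeasurable g) {q : ℝ} (hq : 0 < q) {A : ℝ}
    (hA : ∀ u ∈ latCell N, dLp N (ENNReal.ofReal q) (fun z => g (latPt N z + u)) ≤ A) :
    cLp (ENNReal.ofReal q) g ≤ ENNReal.ofReal A := by
  have hN : (0 : ℝ) < N := Nat.cast_pos.mpr (NeZero.pos N)
  have zero_mem_Icc : (0 : ℝ) ∈ Set.Icc (-(1 / N : ℝ)) 0 := ⟨neg_nonpos.mpr (by positivity), le_rfl⟩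
  have hA0 : 0 ≤ A := (dLp_ofReal_nonneg _ hq).trans (hA 0 ⟨zero_mem_Icc, zero_mem_Icc⟩)
  have cell_le (u : ℝ × ℝ) (hu : u ∈ latCell N) :
      ∑ z : Lat N, ‖g (latPt N z + u)‖ₑ ^ q ≤ ENNReal.ofReal ((N : ℝ) ^ 2 * A ^ q) := by
    have := Real.rpow_le_rpow (dLp_ofReal_nonneg _ hq) (hA u hu) hq.le
    rw [dLp_ofReal_rpow _ hq, inv_mul_le_iff₀ (by positivity)] at this
    simp only [← ofReal_norm, ENNReal.ofReal_rpow_of_nonneg (norm_nonneg _) hq.le]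
    rw [← ENNReal.ofReal_sum_of_nonneg fun z _ => by positivity]
    exact ENNReal.ofReal_le_ofReal this
  have lintegral_le : ∫⁻ x in box, ‖g x‖ₑ ^ q ≤ ENNReal.ofReal A ^ q := by
    refine (lintegral_box_le_of_forall_latCell (hg.enorm.pow_const q) cell_le).trans_eq ?_
    rw [← ENNReal.ofReal_mul (by positivity), ENNReal.ofReal_rpow_of_nonneg hA0 hq.le]
    congr 1
    field_simp
  rw [cLp, eLpNorm_eq_lintegral_rpow_enorm_toReal (ENNReal.ofReal_pos.mpr hq).ne'
    ENNReal.ofReal_ne_top, ENNReal.toReal_ofReal hq.le, one_div]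
  exact (ENNReal.rpow_inv_le_iff hq).mpr lintegral_le

end Cells

section ExtensionBound

variable {N : ℕ} [NeZero N]

lemma one_add_mul_mem_Icc_of_mem {v : ℝ} (hv : v ∈ Set.Icc (-(1 / N : ℝ)) 0) :
    1 + N * v ∈ Set.Icc (0 : ℝ) 1 := by
  have hN : (0 : ℝ) < N := Nat.cast_pos.mpr (NeZero.pos N)
  have := mul_le_mul_of_nonneg_left hv.1 hN.le
  rw [mul_neg, mul_one_div_cancel hN.ne'] at this
  exact ⟨by linarith, by linarith [mul_nonpos_of_nonneg_of_nonpos hN.le hv.2]⟩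

lemma cLp_Ex_le_of_forall_dLp_fracShift₂_le (F : Lat N → ℂ) {q : ℝ} (hq : 0 < q) {A : ℝ}
    (hA : ∀ t ∈ Set.Icc (0 : ℝ) 1, ∀ s ∈ Set.Icc (0 : ℝ) 1,
      dLp N (ENNReal.ofReal q) (fracShift₂ N t s F) ≤ A) :
    cLp (ENNReal.ofReal q) (Ex N F) ≤ ENNReal.ofReal A := by
  refine cLp_le_of_forall_latCell (N := N) (continuous_Ex F).stronglyMeasurable hq fun u hu => ?_
  simp only [Ex_latPt_add]
  rw [dLp_comp_sub_right _ hq]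
  exact hA _ (one_add_mul_mem_Icc_of_mem hu.1) _ (one_add_mul_mem_Icc_of_mem hu.2)

lemma cLp_Ex_le {p : ℝ} (hp : 3 / 2 ≤ p) (F : Lat N → ℂ) :
    cLp (ENNReal.ofReal p) (Ex N F) ≤ ENNReal.ofReal (2 * dLp N (ENNReal.ofReal p) F +
      2 * (√(gradEnergy N F) ^ (1 / p) *
        (lebesgueBound N ^ 2 * dLp N (ENNReal.ofReal (2 * p - 2)) F) ^ (1 - 1 / p))) := by
  have hp1 : 1 < p := by linarith
  have hp' : 1 / p ≤ 1 := (div_le_one (by linarith)).mpr hp1.le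
  refine cLp_Ex_le_of_forall_dLp_fracShift₂_le F (by linarith) fun t ht s hs => ?_
  refine (dLp_le_two_mul_dLp_add_mul F (fracShift₂ N t s F) hp1).trans ?_
  have hdiff := dLp_two_fracShift₂_sub_le ht hs F
  have hshift := dLp_fracShift₂_le ht hs (by linarith : 1 ≤ 2 * p - 2) F
  have := dLp_ofReal_nonneg (fracShift₂ N t s F - F) two_pos
  have := dLp_ofReal_nonneg (fracShift₂ N t s F) (by linarith : 0 < 2 * p - 2)
  gcongr

end ExtensionBound

theorem statement7_general (p : ℝ) (hp : 3 / 2 ≤ p) (κ : ℝ) (hκ : 0 < κ) :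
    ∃ C : ℝ, 0 < C ∧ ∀ (N : ℕ) [NeZero N] (F : Lat N → ℂ),
      cLp (ENNReal.ofReal p) (Ex N F) ≤
        ENNReal.ofReal (C * dLp N (ENNReal.ofReal p) F +
          C * (N : ℝ) ^ κ * dLp N (ENNReal.ofReal (2 * p - 2)) F ^ (1 - 1 / p) *
            gradEnergy N F ^ (1 / (2 * p))) := by
  set c : ℝ := (2 * (1 + 2 ^ (κ / 2) / (κ / 2))) ^ 2
  refine ⟨2 * (1 + c), by positivity, fun N _ F => ?_⟩
  refine (cLp_Ex_le hp F).trans (ENNReal.ofReal_le_ofReal ?_)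
  have hX := dLp_ofReal_nonneg F (by linarith : 0 < p)
  have hY := dLp_ofReal_nonneg F (by linarith : 0 < 2 * p - 2)
  have hE := gradEnergy_nonneg F
  set X := dLp N (ENNReal.ofReal p) F
  set Y := dLp N (ENNReal.ofReal (2 * p - 2)) F
  have hL : 1 ≤ lebesgueBound N ^ 2 := one_le_pow₀ one_le_lebesgueBound
  have rpow_le : (lebesgueBound N ^ 2 * Y) ^ (1 - 1 / p) ≤ c * (N : ℝ) ^ κ * Y ^ (1 - 1 / p) := by
    rw [Real.mul_rpow (by positivity) hY]
    gcongr
    calc (lebesgueBound N ^ 2) ^ (1 - 1 / p) ≤ lebesgueBound N ^ 2 :=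
          Real.rpow_le_self_of_one_le hL (by linarith [show 0 < 1 / p by positivity])
      _ ≤ c * (N : ℝ) ^ κ := sq_lebesgueBound_le hκ
  have sqrt_rpow : √(gradEnergy N F) ^ (1 / p) = gradEnergy N F ^ (1 / (2 * p)) := by
    rw [Real.sqrt_eq_rpow, ← Real.rpow_mul hE, div_mul_div_comm, one_mul]
  rw [sqrt_rpow]
  calc 2 * X + 2 * (gradEnergy N F ^ (1 / (2 * p)) * (lebesgueBound N ^ 2 * Y) ^ (1 - 1 / p))
      ≤ 2 * X + 2 * (gradEnergy N F ^ (1 / (2 * p)) * (c * (N : ℝ) ^ κ * Y ^ (1 - 1 / p))) := by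
        gcongr
    _ = 2 * X + 2 * c * (N : ℝ) ^ κ * Y ^ (1 - 1 / p) * gradEnergy N F ^ (1 / (2 * p)) := by ring
    _ ≤ _ := by
        gcongr <;> linarith [show 0 ≤ c by positivity]

/-- `‖Ex f‖_{L^p(𝕋²)} ≤ C‖f‖_{L^p(Λ_ε)} +
C ε^{-κ} ‖f‖_{L^{2p-2}(Λ_ε)}^{1-1/p} (Σ_{|x-y|=ε} ε²(f(y)-f(x))²)^{1/(2p)}`. -/
theorem statement7 (p : ℝ) (hp : 2 ≤ p) (κ : ℝ) (hκ : 0 < κ) :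
    ∃ C : ℝ, 0 < C ∧ ∀ (N : ℕ) [NeZero N], 2 ≤ N → ∀ f : Lat N → ℝ,
      cLp (ENNReal.ofReal p) (Ex N (fun z => ((f z : ℝ) : ℂ))) ≤
        ENNReal.ofReal (C * dLp N (ENNReal.ofReal p) f +
          C * (N : ℝ) ^ κ * (dLp N (ENNReal.ofReal (2*p - 2)) f) ^ (1 - 1/p) *
            (nnSum N f) ^ (1/(2*p))) := by
  obtain ⟨C, hC, h⟩ := statement7_general p (by linarith) κ hκ
  exact ⟨C, hC, fun N _ _ f => by
    simpa only [dLp_comp_ofReal, gradEnergy_comp_ofReal] using h N fun z => (f z : ℂ)⟩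

end IsingKac
end
end

section
/- Let λ > 1, c₁, c₂ > 0, T > 0, and let f: [0,T] → [0,∞) be differentiable and satisfy f′(t) + 2c₁ f(t)^λ ≤ c₂ for all t ∈ [0,T]. Then for all t ∈ [0,T]: f(t) ≤ max( f(0) / (1 + c₁(λ−1) t f(0)^{λ−1})^{1/(λ−1)}, (c₂/c₁)^{1/λ} ); in particular, for t > 0, f(t) ≤ max( (c₁(λ−1)t)^{−1/(λ−1)}, (c₂/c₁)^{1/λ} ). -/
open scoped BigOperators ENNReal
open MeasureTheory

noncomputable section

namespace IsingKac

open scoped NNReal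

/-!
Where `f` exceeds the threshold `M = (c₂/c₁) ^ (1/λ)`, half of the damping `2 c₁ f ^ λ` absorbs
`c₂`, so that `f' ≤ -c₁ f ^ λ`. In particular `f` cannot cross `M` upwards: if `f t > M`, then
`f > M` on all of `[0, t]`. There the Bernoulli substitution `f ^ (-(λ - 1))` makes the inequality
linear, with slope at least `c₁ (λ - 1)`, and integrating it gives the decay of `f`.
-/

section Powers

variable {lam c₁ c₂ p x y : ℝ}

theorem le_neg_mul_rpow_of_add_two_mul_rpow_le (hlam : 0 < lam) (hc₁ : 0 < c₁) (hc₂ : 0 ≤ c₂)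
    (hx : (c₂ / c₁) ^ (1 / lam) ≤ x) (hy : y + 2 * c₁ * x ^ lam ≤ c₂) :
    y ≤ -(c₁ * x ^ lam) := by
  have hq : 0 ≤ c₂ / c₁ := div_nonneg hc₂ hc₁.le
  have hx₀ : 0 ≤ x := (Real.rpow_nonneg hq _).trans hx
  rw [one_div, Real.rpow_inv_le_iff_of_pos hq hx₀ hlam, div_le_iff₀ hc₁] at hx
  linarith

theorem le_rpow_neg_one_div_of_le_rpow_neg (hp : 0 < p) (hx : 0 < x) (hy : 0 < y)
    (h : x ≤ y ^ (-p)) : y ≤ x ^ (-(1 / p)) := by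
  rwa [one_div, ← inv_neg, Real.le_rpow_inv_iff_of_neg hy hx (neg_neg_of_pos hp)]

theorem rpow_neg_add_rpow_neg_one_div {k : ℝ} (hp : p ≠ 0) (hx : 0 < x) (hk : 0 ≤ k) :
    (x ^ (-p) + k) ^ (-(1 / p)) = x / (1 + k * x ^ p) ^ (1 / p) := by
  have hxp : 0 < x ^ p := Real.rpow_pos_of_pos hx p
  have hfactor : x ^ (-p) + k = (1 + k * x ^ p) / x ^ p := by
    rw [Real.rpow_neg hx.le]
    field_simp
  rw [hfactor, Real.rpow_neg (by positivity), Real.div_rpow (by positivity) hxp.le, inv_div,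
    one_div, Real.rpow_rpow_inv hx.le hp]

end Powers

section DifferentialInequality

open Set

variable {f f' : ℝ → ℝ} {a b c lam M : ℝ}

theorem lt_image_of_deriv_right_neg_of_lt_image_right (hf : ContinuousOn f (Icc a b))
    (hf' : ∀ x ∈ Ico a b, HasDerivWithinAt f (f' x) (Ici x) x)
    (hneg : ∀ x ∈ Ico a b, M < f x → f' x < 0) (hb : M < f b) :
    ∀ x ∈ Icc a b, M < f x := by
  intro x hx
  -- `f' < 0` is only known strictly above `M`, so the barrier is a level `m` slightly higher.
  obtain ⟨m, hMm, hmb⟩ := exists_between hb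
  by_contra! hxM
  refine hmb.not_ge ?_
  exact image_le_of_deriv_right_lt_deriv_boundary (B := fun _ => m) (B' := fun _ => 0)
    (hf.mono (Icc_subset_Icc_left hx.1)) (fun y hy => hf' y ⟨hx.1.trans hy.1, hy.2⟩)
    (hxM.trans hMm.le) (fun y => hasDerivAt_const y m)
    (fun y hy hym => hneg y ⟨hx.1.trans hy.1, hy.2⟩ (hMm.trans_eq hym.symm)) (right_mem_Icc.2 hx.2)

theorem rpow_neg_add_le_of_deriv_right_le_neg_mul_rpow (hab : a ≤ b) (hlam : 1 ≤ lam)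
    (hf : ContinuousOn f (Icc a b)) (hf' : ∀ x ∈ Ico a b, HasDerivWithinAt f (f' x) (Ici x) x)
    (hpos : ∀ x ∈ Icc a b, 0 < f x) (hle : ∀ x ∈ Ico a b, f' x ≤ -(c * f x ^ lam)) :
    f a ^ (-(lam - 1)) + c * (lam - 1) * (b - a) ≤ f b ^ (-(lam - 1)) := by
  have hslope : ∀ x ∈ Ico a b, c * (lam - 1) ≤ f' x * (-(lam - 1)) * f x ^ (-(lam - 1) - 1) := by
    intro x hx
    have hfx : 0 < f x := hpos x (Ico_subset_Icc_self hx)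
    have hcancel : f x ^ lam * f x ^ (-(lam - 1) - 1) = 1 := by
      rw [← Real.rpow_add hfx, show lam + (-(lam - 1) - 1) = 0 by ring, Real.rpow_zero]
    calc c * (lam - 1) = c * f x ^ lam * (lam - 1) * f x ^ (-(lam - 1) - 1) := by
          linear_combination -(c * (lam - 1)) * hcancel
      _ ≤ -f' x * (lam - 1) * f x ^ (-(lam - 1) - 1) := by
          gcongr
          exact le_neg_of_le_neg (hle x hx)
      _ = f' x * (-(lam - 1)) * f x ^ (-(lam - 1) - 1) := by ring
  refine image_le_of_deriv_right_le_deriv_boundary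
    (f := fun x => f a ^ (-(lam - 1)) + c * (lam - 1) * (x - a)) (f' := fun _ => c * (lam - 1))
    (by fun_prop) (fun x _ => ?_) (by simp)
    (hf.rpow_const fun x hx => Or.inl (hpos x hx).ne')
    (fun x hx => (hf' x hx).rpow_const (Or.inl (hpos x (Ico_subset_Icc_self hx)).ne'))
    hslope (right_mem_Icc.2 hab)
  simpa only [mul_one, id_eq] using
    (((hasDerivWithinAt_id x _).sub_const a).const_mul (c * (lam - 1))).const_add
      (f a ^ (-(lam - 1)))

theorem statement13_general {T : ℝ} (hlam : 1 < lam) (hc : 0 < c) (hM : 0 ≤ M)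
    (hf : ContinuousOn f (Icc 0 T)) (hf' : ∀ t ∈ Ico 0 T, HasDerivWithinAt f (f' t) (Ici t) t)
    (hle : ∀ t ∈ Ico 0 T, M < f t → f' t ≤ -(c * f t ^ lam)) :
    ∀ t ∈ Icc 0 T,
      f t ≤ max (f 0 / (1 + c * (lam - 1) * t * f 0 ^ (lam - 1)) ^ (1 / (lam - 1))) M ∧
      (0 < t → f t ≤ max ((c * (lam - 1) * t) ^ (-(1 / (lam - 1)))) M) := by
  rintro t ⟨ht₀, htT⟩
  rcases le_or_gt (f t) M with htM | hMt
  · exact ⟨le_max_of_le_right htM, fun _ => le_max_of_le_right htM⟩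
  have hft : ContinuousOn f (Icc 0 t) := hf.mono (Icc_subset_Icc_right htT)
  have hsub : Ico 0 t ⊆ Ico 0 T := Ico_subset_Ico_right htT
  have habove : ∀ s ∈ Icc 0 t, M < f s := by
    refine lt_image_of_deriv_right_neg_of_lt_image_right hft (fun s hs => hf' s (hsub hs))
      (fun s hs hMs => (hle s (hsub hs) hMs).trans_lt ?_) hMt
    exact neg_neg_of_pos (mul_pos hc (Real.rpow_pos_of_pos (hM.trans_lt hMs) lam))
  have hpos : ∀ s ∈ Icc 0 t, 0 < f s := fun s hs => hM.trans_lt (habove s hs)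
  have hbernoulli : f 0 ^ (-(lam - 1)) + c * (lam - 1) * t ≤ f t ^ (-(lam - 1)) := by
    simpa only [sub_zero] using
      rpow_neg_add_le_of_deriv_right_le_neg_mul_rpow ht₀ hlam.le hft (fun s hs => hf' s (hsub hs))
        hpos fun s hs => hle s (hsub hs) (habove s (Ico_subset_Icc_self hs))
  have hp : 0 < lam - 1 := sub_pos.2 hlam
  have hf₀ : 0 < f 0 := hpos 0 (left_mem_Icc.2 ht₀)
  have hft₀ : 0 < f t := hpos t (right_mem_Icc.2 ht₀)
  have hf₀p : 0 < f 0 ^ (-(lam - 1)) := Real.rpow_pos_of_pos hf₀ _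
  refine ⟨le_max_of_le_left ?_, fun ht => le_max_of_le_left ?_⟩
  · rw [← rpow_neg_add_rpow_neg_one_div hp.ne' hf₀ (by positivity)]
    exact le_rpow_neg_one_div_of_le_rpow_neg hp (by positivity) hft₀ hbernoulli
  · exact le_rpow_neg_one_div_of_le_rpow_neg hp (by positivity) hft₀ (by linarith)

end DifferentialInequality

/-- comparison test for the ODE inequality `f' + 2c₁ f^λ ≤ c₂`. -/
theorem statement13 (lam c₁ c₂ T : ℝ) (hlam : 1 < lam) (hc₁ : 0 < c₁) (hc₂ : 0 < c₂)
    (hT : 0 < T) (f f' : ℝ → ℝ)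
    (hpos : ∀ t ∈ Set.Icc (0:ℝ) T, 0 ≤ f t)
    (hderiv : ∀ t ∈ Set.Icc (0:ℝ) T, HasDerivWithinAt f (f' t) (Set.Icc (0:ℝ) T) t)
    (hineq : ∀ t ∈ Set.Icc (0:ℝ) T, f' t + 2*c₁ * (f t) ^ lam ≤ c₂) :
    ∀ t ∈ Set.Icc (0:ℝ) T,
      f t ≤ max (f 0 / (1 + c₁*(lam-1)*t*(f 0) ^ (lam-1)) ^ (1/(lam-1))) ((c₂/c₁) ^ (1/lam)) ∧
      (0 < t → f t ≤ max ((c₁*(lam-1)*t) ^ (-(1/(lam-1)))) ((c₂/c₁) ^ (1/lam))) :=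
  statement13_general hlam hc₁ (by positivity)
    (fun t ht => (hderiv t ht).continuousWithinAt)
    (fun t ht => (hderiv t (Set.Ico_subset_Icc_self ht)).mono_of_mem_nhdsWithin
      (Icc_mem_nhdsGE_of_mem ht))
    fun t ht hMt => le_neg_mul_rpow_of_add_two_mul_rpow_le (zero_lt_one.trans hlam) hc₁ hc₂.le
      hMt.le (hineq t (Set.Ico_subset_Icc_self ht))

end IsingKac
end
end

section
/- For every even integer p ≥ 2 and every j ∈ ℕ there exists a constant C = C(p,j) > 0 such that for all real numbers a, b and all λ > 0: |a^{p−1+j} − b^{p−1+j}| ≤ λ |a^{p−1} − b^{p−1}| |a − b| + (C/λ) ( |a|^{p−2+2j} + |b|^{p−2+2j} ). -/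
open scoped BigOperators ENNReal
open MeasureTheory

noncomputable section

namespace IsingKac

open scoped NNReal

/-!
The two terms on the right have product `C U V`, where `U = |a ^ (p-1) - b ^ (p-1)| |a - b|` and
`V = |a| ^ (p-2+2j) + |b| ^ (p-2+2j)`, so by AM-GM it suffices to bound
`(a ^ (p-1+j) - b ^ (p-1+j)) ^ 2` by a multiple of `U V`. With `M = max |a| |b|`, factoring out
`a - b` bounds the square by a multiple of `(a - b) ^ 2 M ^ (p-2) M ^ (p-2+2j)`. The last factor is
at most `V`, and since `p - 2` is even, `(a - b) ^ 2 M ^ (p-2)` is at most `2 U`.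
-/

section OrderedSemiring

variable {R : Type*} [Semiring R] [LinearOrder R] [IsOrderedRing R] {x y : R}

theorem max_pow_le_pow_add_pow (hx : 0 ≤ x) (hy : 0 ≤ y) (k : ℕ) :
    max x y ^ k ≤ x ^ k + y ^ k := by
  rcases max_choice x y with h | h <;> rw [h]
  · exact le_add_of_nonneg_right (pow_nonneg hy k)
  · exact le_add_of_nonneg_left (pow_nonneg hx k)

end OrderedSemiring

section OrderedRing

variable {R : Type*} [CommRing R] [LinearOrder R] [IsStrictOrderedRing R] {m : ℕ}

theorem pow_sub_pow_mul_pow_sub_pow_nonneg {x y : R} (hx : 0 ≤ x) (hy : 0 ≤ y) (k l : ℕ) :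
    0 ≤ (x ^ k - y ^ k) * (x ^ l - y ^ l) := by
  rcases le_total x y with h | h
  · exact mul_nonneg_of_nonpos_of_nonpos (sub_nonpos.2 (pow_le_pow_left₀ hx h k))
      (sub_nonpos.2 (pow_le_pow_left₀ hx h l))
  · exact mul_nonneg (sub_nonneg.2 (pow_le_pow_left₀ hy h k))
      (sub_nonneg.2 (pow_le_pow_left₀ hy h l))

theorem sq_sub_mul_pow_add_pow_le (hm : Even m) (a b : R) :
    (a - b) ^ 2 * (a ^ m + b ^ m) ≤ 2 * ((a ^ (m + 1) - b ^ (m + 1)) * (a - b)) := by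
  have hcross : 0 ≤ (a ^ 2 - b ^ 2) * (a ^ m - b ^ m) := by
    simpa only [sq_abs, hm.pow_abs] using
      pow_sub_pow_mul_pow_sub_pow_nonneg (abs_nonneg a) (abs_nonneg b) 2 m
  calc (a - b) ^ 2 * (a ^ m + b ^ m)
      ≤ (a - b) ^ 2 * (a ^ m + b ^ m) + (a ^ 2 - b ^ 2) * (a ^ m - b ^ m) :=
        le_add_of_nonneg_right hcross
    _ = 2 * ((a ^ (m + 1) - b ^ (m + 1)) * (a - b)) := by ring

theorem sq_sub_mul_max_abs_pow_le (hm : Even m) (a b : R) :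
    (a - b) ^ 2 * max |a| |b| ^ m ≤ 2 * (|a ^ (m + 1) - b ^ (m + 1)| * |a - b|) := by
  have hmax : max |a| |b| ^ m ≤ a ^ m + b ^ m := by
    simpa only [hm.pow_abs] using max_pow_le_pow_add_pow (abs_nonneg a) (abs_nonneg b) m
  calc (a - b) ^ 2 * max |a| |b| ^ m
      ≤ (a - b) ^ 2 * (a ^ m + b ^ m) := by gcongr
    _ ≤ 2 * ((a ^ (m + 1) - b ^ (m + 1)) * (a - b)) := sq_sub_mul_pow_add_pow_le hm a b
    _ ≤ 2 * (|a ^ (m + 1) - b ^ (m + 1)| * |a - b|) := by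
        rw [← abs_mul]
        gcongr
        exact le_abs_self _

theorem sq_pow_sub_pow_le (a b : R) (k : ℕ) :
    (a ^ (k + 1) - b ^ (k + 1)) ^ 2 ≤
      ((k + 1 : ℕ) : R) ^ 2 * ((a - b) ^ 2 * max |a| |b| ^ (2 * k)) := by
  calc (a ^ (k + 1) - b ^ (k + 1)) ^ 2
      = |a ^ (k + 1) - b ^ (k + 1)| ^ 2 := (sq_abs _).symm
    _ ≤ (|a - b| * (k + 1 : ℕ) * max |a| |b| ^ k) ^ 2 := by
        gcongr
        exact abs_pow_sub_pow_le a b (k + 1)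
    _ = ((k + 1 : ℕ) : R) ^ 2 * (|a - b| ^ 2 * max |a| |b| ^ (2 * k)) := by ring
    _ = ((k + 1 : ℕ) : R) ^ 2 * ((a - b) ^ 2 * max |a| |b| ^ (2 * k)) := by rw [sq_abs]

theorem sq_pow_sub_pow_le_of_even (hm : Even m) (j : ℕ) (a b : R) :
    (a ^ (m + 1 + j) - b ^ (m + 1 + j)) ^ 2 ≤
      2 * ((m + 1 + j : ℕ) : R) ^ 2 *
        (|a ^ (m + 1) - b ^ (m + 1)| * |a - b| * (|a| ^ (m + 2 * j) + |b| ^ (m + 2 * j))) := by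
  rw [Nat.add_right_comm m 1 j]
  calc (a ^ (m + j + 1) - b ^ (m + j + 1)) ^ 2
      ≤ ((m + j + 1 : ℕ) : R) ^ 2 * ((a - b) ^ 2 * max |a| |b| ^ (2 * (m + j))) :=
        sq_pow_sub_pow_le a b (m + j)
    _ = ((m + j + 1 : ℕ) : R) ^ 2 *
          ((a - b) ^ 2 * max |a| |b| ^ m * max |a| |b| ^ (m + 2 * j)) := by ring
    _ ≤ ((m + j + 1 : ℕ) : R) ^ 2 * (2 * (|a ^ (m + 1) - b ^ (m + 1)| * |a - b|) *
          (|a| ^ (m + 2 * j) + |b| ^ (m + 2 * j))) := by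
        gcongr _ * (?_ * ?_)
        · exact sq_sub_mul_max_abs_pow_le hm a b
        · exact max_pow_le_pow_add_pow (abs_nonneg a) (abs_nonneg b) _
    _ = _ := by ring

end OrderedRing

/-- The exponent `m` is `p - 2` in `statement15`. -/
theorem statement15_general {K : Type*} [Field K] [LinearOrder K] [IsStrictOrderedRing K]
    {m : ℕ} (hm : Even m) (j : ℕ) (a b : K) {lam : K} (hlam : 0 < lam) :
    |a ^ (m + 1 + j) - b ^ (m + 1 + j)| ≤
      lam * |a ^ (m + 1) - b ^ (m + 1)| * |a - b| +
        ((m + 1 + j : ℕ) ^ 2 / 2 / lam) * (|a| ^ (m + 2 * j) + |b| ^ (m + 2 * j)) := by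
  refine abs_le_of_sq_le_sq (le_trans ?_ (four_mul_le_sq_add _ _)) (by positivity)
  calc (a ^ (m + 1 + j) - b ^ (m + 1 + j)) ^ 2
      ≤ 2 * ((m + 1 + j : ℕ) : K) ^ 2 * (|a ^ (m + 1) - b ^ (m + 1)| * |a - b| *
          (|a| ^ (m + 2 * j) + |b| ^ (m + 2 * j))) := sq_pow_sub_pow_le_of_even hm j a b
    _ = 4 * (lam * |a ^ (m + 1) - b ^ (m + 1)| * |a - b|) *
          (((m + 1 + j : ℕ) ^ 2 / 2 / lam) * (|a| ^ (m + 2 * j) + |b| ^ (m + 2 * j))) := by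
        field

/-- generalised Young-type bound
`|a^{p-1+j} - b^{p-1+j}| ≤ λ|a^{p-1}-b^{p-1}||a-b| + (C/λ)(|a|^{p-2+2j}+|b|^{p-2+2j})`. -/
theorem statement15 (p j : ℕ) (hp : Even p) (hp2 : 2 ≤ p) :
    ∃ C : ℝ, 0 < C ∧ ∀ a b lam : ℝ, 0 < lam →
      |a^(p-1+j) - b^(p-1+j)| ≤
        lam * |a^(p-1) - b^(p-1)| * |a - b| + (C/lam) * (|a|^(p-2+2*j) + |b|^(p-2+2*j)) := by
  obtain ⟨m, rfl⟩ := Nat.exists_eq_add_of_le' hp2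
  exact ⟨(m + 1 + j : ℕ) ^ 2 / 2, by positivity, fun a b _ ↦
    statement15_general (hp.tsub even_two) j a b⟩

end IsingKac
end
end
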